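/- arXiv:2407.07108 — 12 statements merged into one kernel-verified Lean document; each statement's English description precedes it below -/
import Mathlib

section
/- For any parameters I_ph, I_o, A, R_s, G_sh > 0 and any voltage V ∈ ℝ, the map I ↦ I_o·(exp((V + R_s·I)/A) − 1) + G_sh·(V + R_s·I) + I is strictly increasing and surjective on ℝ; consequently there exists exactly one current I ∈ ℝ satisfying the single-diode model equation I_ph = I_o·(exp((V + R_s·I)/A) − 1) + G_sh·(V + R_s·I) + I. -/
/-!
The current through the diode and the shunt is a monotone function of the terminal current.
A monotone function is bounded below near `+∞` and above near `-∞`, so adding the identity to it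
leaves the limits of the identity unchanged; surjectivity follows by continuity.
-/

open Filter

section MonotoneAdd

variable {α β : Type*} [Preorder α] [Nonempty α] [AddCommGroup β] [PartialOrder β]
  [IsOrderedAddMonoid β] {f g : α → β}

lemma tendsto_add_atTop_of_monotone (hf : Monotone f) (hg : Tendsto g atTop atTop) :
    Tendsto (fun x => f x + g x) atTop atTop := by
  obtain ⟨x₀⟩ := ‹Nonempty α›
  have hbound : ∀ᶠ x in atTop, f x₀ ≤ f x := (eventually_ge_atTop x₀).mono fun _ hx => hf hx
  exact tendsto_atTop_add_left_of_le' atTop (f x₀) hbound hg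

lemma tendsto_add_atBot_of_monotone (hf : Monotone f) (hg : Tendsto g atBot atBot) :
    Tendsto (fun x => f x + g x) atBot atBot :=
  tendsto_add_atTop_of_monotone (α := αᵒᵈ) (β := βᵒᵈ) hf.dual hg

end MonotoneAdd

lemma surjective_add_of_monotone {α β : Type*} [ConditionallyCompleteLinearOrder α] [Nonempty α]
    [DenselyOrdered α] [TopologicalSpace α] [OrderTopology α] [AddCommGroup β] [LinearOrder β]
    [IsOrderedAddMonoid β] [TopologicalSpace β] [OrderTopology β] {f g : α → β}
    (hf : Monotone f) (hf_cont : Continuous f) (hg_cont : Continuous g)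
    (hg_top : Tendsto g atTop atTop) (hg_bot : Tendsto g atBot atBot) :
    Function.Surjective fun x => f x + g x :=
  (hf_cont.add hg_cont).surjective (tendsto_add_atTop_of_monotone hf hg_top)
    (tendsto_add_atBot_of_monotone hf hg_bot)

/-- The current through the diode and the parallel shunt conductance of the single-diode model,
as a function of the junction voltage `U`, which is `V + Rs * I` at terminal voltage `V` and
terminal current `I`. -/
noncomputable def junctionCurrent (Io A Gsh U : ℝ) : ℝ :=
  Io * (Real.exp (U / A) - 1) + Gsh * U

lemma monotone_junctionCurrent {Io A Gsh : ℝ} (hIo : 0 ≤ Io) (hA : 0 < A) (hGsh : 0 ≤ Gsh) :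
    Monotone (junctionCurrent Io A Gsh) := by
  intro U₁ U₂ hU
  unfold junctionCurrent
  gcongr

lemma continuous_junctionCurrent (Io A Gsh : ℝ) : Continuous (junctionCurrent Io A Gsh) := by
  unfold junctionCurrent
  fun_prop

/-- For any parameters I_ph, I_o, A, R_s, G_sh > 0 and any voltage V, the map
I ↦ I_o·(exp((V + R_s·I)/A) − 1) + G_sh·(V + R_s·I) + I is strictly increasing and
surjective on ℝ; consequently there exists exactly one current I satisfying the
single-diode model equation. -/
theorem stmt_0 (Iph Io A Rs Gsh : ℝ)
    (hIph : 0 < Iph) (hIo : 0 < Io) (hA : 0 < A) (hRs : 0 < Rs) (hGsh : 0 < Gsh)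
    (V : ℝ) :
    StrictMono (fun I : ℝ =>
      Io * (Real.exp ((V + Rs * I) / A) - 1) + Gsh * (V + Rs * I) + I) ∧
    Function.Surjective (fun I : ℝ =>
      Io * (Real.exp ((V + Rs * I) / A) - 1) + Gsh * (V + Rs * I) + I) ∧
    ∃! I : ℝ, Iph = Io * (Real.exp ((V + Rs * I) / A) - 1) + Gsh * (V + Rs * I) + I := by
  have hvoltage : Monotone fun I : ℝ => V + Rs * I :=
    (monotone_mul_left_of_nonneg hRs.le).const_add V
  have hmono : Monotone fun I => junctionCurrent Io A Gsh (V + Rs * I) :=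
    (monotone_junctionCurrent hIo.le hA hGsh.le).comp hvoltage
  have hcont : Continuous fun I => junctionCurrent Io A Gsh (V + Rs * I) :=
    (continuous_junctionCurrent Io A Gsh).comp (by fun_prop)
  have hstrict : StrictMono fun I => junctionCurrent Io A Gsh (V + Rs * I) + I :=
    hmono.add_strictMono strictMono_id
  have hsurj : Function.Surjective fun I => junctionCurrent Io A Gsh (V + Rs * I) + I :=
    surjective_add_of_monotone hmono hcont continuous_id tendsto_id tendsto_id
  have hunique : ∃! I, Iph = junctionCurrent Io A Gsh (V + Rs * I) + I := by
    simpa only [eq_comm] using Function.Bijective.existsUnique ⟨hstrict.injective, hsurj⟩ Iph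
  exact ⟨hstrict, hsurj, hunique⟩
end

section
/- Let I_ph, I_o, A, R_s, G_sh > 0 and let I : ℝ → ℝ be the SDM solution function. Then I is differentiable on ℝ and for every V its derivative equals −(I_o·exp((V + R_s·I(V))/A) + A·G_sh) / (A + R_s·(I_o·exp((V + R_s·I(V))/A) + A·G_sh)); in particular I'(V) < 0 for all V, so I is strictly decreasing on ℝ. -/
/-!
Put `u V = V + Rs * I V` and let `g` be the current through the diode and the shunt. The equation
`Iph = g (u V) + I V` says that `u` is a right inverse of the strictly increasing function
`x ↦ x + Rs * (g x - Iph)`, so `u` is continuous and the inverse function rule gives its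
derivative. The derivative of `I = Iph - g ∘ u` follows by the chain rule; writing `I` in this way
rather than as `(u V - V) / Rs` avoids dividing by the series resistance.
-/

theorem continuous_of_rightInverse_strictMono {α β : Type*} [LinearOrder α] [TopologicalSpace α]
    [OrderTopology α] [Preorder β] [TopologicalSpace β] [OrderTopology β] {h : α → β} {u : β → α}
    (hh : StrictMono h) (hu : Function.RightInverse u h) : Continuous u :=
  (hh.orderIsoOfRightInverse h u hu).symm.continuous

theorem hasDerivAt_of_rightInverse_strictMono {h u : ℝ → ℝ} {h' y : ℝ} (hh : StrictMono h)
    (hu : Function.RightInverse u h) (hd : HasDerivAt h h' (u y)) (hne : h' ≠ 0) :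
    HasDerivAt u h'⁻¹ y :=
  hd.of_local_left_inverse (continuous_of_rightInverse_strictMono hh hu).continuousAt hne
    (.of_forall hu)

theorem hasDerivAt_of_eq_comp_add_mul_add {f g : ℝ → ℝ} {c r g' x : ℝ}
    (hf : ∀ y, c = g (y + r * f y) + f y) (hmono : StrictMono fun y ↦ y + r * g y)
    (hg : HasDerivAt g g' (x + r * f x)) (hne : 1 + r * g' ≠ 0) :
    HasDerivAt f (-g' / (1 + r * g')) x := by
  set u : ℝ → ℝ := fun y ↦ y + r * f y
  have hfu : f = fun y ↦ c - g (u y) := funext fun y ↦ by linarith [hf y]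
  have hu : Function.RightInverse u fun y ↦ y + r * (g y - c) := fun y ↦ by
    linear_combination -r * hf y
  have hshift : StrictMono fun y ↦ y + r * (g y - c) := fun a b hab ↦ by
    linarith [hmono hab]
  have hderiv : HasDerivAt (fun y ↦ y + r * (g y - c)) (1 + r * g') (u x) :=
    (hasDerivAt_id _).add ((hg.sub_const c).const_mul r)
  have hu' : HasDerivAt u (1 + r * g')⁻¹ x :=
    hasDerivAt_of_rightInverse_strictMono hshift hu hderiv hne
  rw [hfu, neg_div, div_eq_mul_inv]
  exact (hg.comp x hu').const_sub c

/-- The current through a Shockley diode with saturation current `Io` and modified ideality factor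
`A`, in parallel with a shunt of conductance `Gsh`, when both are at voltage `x`. -/
noncomputable def diodeShuntCurrent (Io A Gsh x : ℝ) : ℝ :=
  Io * (Real.exp (x / A) - 1) + Gsh * x

section DiodeShunt

variable {Iph Io A Rs Gsh : ℝ}

theorem hasDerivAt_diodeShuntCurrent (x : ℝ) :
    HasDerivAt (diodeShuntCurrent Io A Gsh) (Io * (Real.exp (x / A) / A) + Gsh) x := by
  have hexp : HasDerivAt (fun y ↦ Real.exp (y / A)) (Real.exp (x / A) / A) x := by
    simpa only [mul_one_div] using ((hasDerivAt_id' x).div_const A).exp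
  exact ((hexp.sub_const 1).const_mul Io).add (hasDerivAt_const_mul Gsh)

theorem monotone_diodeShuntCurrent (hIo : 0 ≤ Io) (hA : 0 ≤ A) (hGsh : 0 ≤ Gsh) :
    Monotone (diodeShuntCurrent Io A Gsh) := fun x y hxy ↦ by
  unfold diodeShuntCurrent
  gcongr

theorem hasDerivAt_singleDiodeSolution (hIo : 0 ≤ Io) (hA : 0 < A) (hRs : 0 ≤ Rs) (hGsh : 0 ≤ Gsh)
    {I : ℝ → ℝ} (hI : ∀ V, Iph = diodeShuntCurrent Io A Gsh (V + Rs * I V) + I V) (V : ℝ) :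
    HasDerivAt I (-(Io * Real.exp ((V + Rs * I V) / A) + A * Gsh) /
      (A + Rs * (Io * Real.exp ((V + Rs * I V) / A) + A * Gsh))) V := by
  have hmono : StrictMono fun x ↦ x + Rs * diodeShuntCurrent Io A Gsh x :=
    strictMono_id.add_monotone ((monotone_diodeShuntCurrent hIo hA.le hGsh).const_mul hRs)
  convert hasDerivAt_of_eq_comp_add_mul_add hI hmono
    (hasDerivAt_diodeShuntCurrent (V + Rs * I V)) (by positivity) using 1
  field_simp

end DiodeShunt

/-- The SDM solution function is differentiable with the indicated (negative)
derivative, hence strictly decreasing. -/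
theorem stmt_1 (Iph Io A Rs Gsh : ℝ)
    (hIph : 0 < Iph) (hIo : 0 < Io) (hA : 0 < A) (hRs : 0 < Rs) (hGsh : 0 < Gsh)
    (I : ℝ → ℝ)
    (hI : ∀ V, Iph = Io * (Real.exp ((V + Rs * I V) / A) - 1) + Gsh * (V + Rs * I V) + I V) :
    Differentiable ℝ I ∧
    (∀ V, deriv I V =
      -(Io * Real.exp ((V + Rs * I V) / A) + A * Gsh) /
        (A + Rs * (Io * Real.exp ((V + Rs * I V) / A) + A * Gsh))) ∧
    (∀ V, deriv I V < 0) ∧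
    StrictAnti I := by
  have hderiv := hasDerivAt_singleDiodeSolution hIo.le hA hRs.le hGsh.le hI
  have hneg (V : ℝ) : deriv I V < 0 := by
    rw [(hderiv V).deriv]
    exact div_neg_of_neg_of_pos (neg_neg_of_pos (by positivity)) (by positivity)
  exact ⟨fun V ↦ (hderiv V).differentiableAt, fun V ↦ (hderiv V).deriv, hneg,
    strictAnti_of_deriv_neg hneg⟩
end

section
/- Let I_ph, I_o, A, R_s, G_sh > 0 and let I : ℝ → ℝ be the SDM solution function. Then I is strictly concave on ℝ; equivalently, its second derivative at every V equals −I_o·A·exp((V + R_s·I(V))/A) / (A + R_s·(I_o·exp((V + R_s·I(V))/A) + A·G_sh))³, which is strictly negative. -/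
/-!
With the diode voltage `w = V + R_s·I` as the unknown, the SDM equation reads `I = φ(w)`, where
`φ` is the characteristic of the device without series resistance, and `w` inverts the strictly
increasing function `w ↦ w - R_s·φ(w)`. Hence `dw/dV = (1 - R_s·φ'(w))⁻¹`, and differentiating
`I = φ(w)` twice gives `I'' = φ''(w) / (1 - R_s·φ'(w))³`, which has the sign of `φ''`.
-/

open Function Set

/-- `I` is the current-voltage characteristic of a device with characteristic `φ` connected in
series with a resistance `R`. The current is counted as delivered by the device (generator
convention), so the voltage across the device exceeds the terminal voltage `V` by `R * I V`. -/
def IsSeriesCharacteristic (φ : ℝ → ℝ) (R : ℝ) (I : ℝ → ℝ) : Prop :=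
  ∀ V, I V = φ (V + R * I V)

namespace IsSeriesCharacteristic

variable {φ φ' φ'' I : ℝ → ℝ} {R : ℝ}

theorem rightInverse (hI : IsSeriesCharacteristic φ R I) :
    RightInverse (fun V => V + R * I V) (fun w => w - R * φ w) := fun V => by
  simp only [← hI V, add_sub_cancel_right]

theorem hasDerivAt_deviceVoltage (hI : IsSeriesCharacteristic φ R I)
    (hφ : ∀ w, HasDerivAt φ (φ' w) w) (hpos : ∀ w, 0 < 1 - R * φ' w) (V : ℝ) :
    HasDerivAt (fun V => V + R * I V) (1 - R * φ' (V + R * I V))⁻¹ V := by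
  have hg (w : ℝ) : HasDerivAt (fun w => w - R * φ w) (1 - R * φ' w) w :=
    (hasDerivAt_id' w).fun_sub ((hφ w).const_mul R)
  have g_strictMono : StrictMono fun w => w - R * φ w :=
    strictMono_of_deriv_pos fun w => (hg w).deriv.symm ▸ hpos w
  exact .of_local_left_inverse
    (g_strictMono.orderIsoOfRightInverse _ _ hI.rightInverse).symm.continuous.continuousAt
    (hg _) (hpos _).ne' (.of_forall hI.rightInverse)

theorem hasDerivAt (hI : IsSeriesCharacteristic φ R I)
    (hφ : ∀ w, HasDerivAt φ (φ' w) w) (hpos : ∀ w, 0 < 1 - R * φ' w) (V : ℝ) :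
    HasDerivAt I (φ' (V + R * I V) / (1 - R * φ' (V + R * I V))) V := by
  have h := (hφ _).comp V (hI.hasDerivAt_deviceVoltage hφ hpos V)
  exact h.congr_of_eventuallyEq (.of_forall hI)

theorem hasDerivAt_deriv (hI : IsSeriesCharacteristic φ R I)
    (hφ : ∀ w, HasDerivAt φ (φ' w) w) (hφ' : ∀ w, HasDerivAt φ' (φ'' w) w)
    (hpos : ∀ w, 0 < 1 - R * φ' w) (V : ℝ) :
    HasDerivAt (deriv I) (φ'' (V + R * I V) / (1 - R * φ' (V + R * I V)) ^ 3) V := by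
  rw [show deriv I = fun V => φ' (V + R * I V) / (1 - R * φ' (V + R * I V)) from
    funext fun V => (hI.hasDerivAt hφ hpos V).deriv]
  have hne := (hpos (V + R * I V)).ne'
  have hslope := (hφ' _).comp V (hI.hasDerivAt_deviceVoltage hφ hpos V)
  refine (hslope.fun_div ((hslope.const_mul R).const_sub 1) hne).congr_deriv ?_
  simp only [comp_apply]
  field_simp
  ring

theorem deriv_deriv_neg (hI : IsSeriesCharacteristic φ R I)
    (hφ : ∀ w, HasDerivAt φ (φ' w) w) (hφ' : ∀ w, HasDerivAt φ' (φ'' w) w)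
    (hpos : ∀ w, 0 < 1 - R * φ' w) (hneg : ∀ w, φ'' w < 0) (V : ℝ) : deriv (deriv I) V < 0 := by
  rw [(hI.hasDerivAt_deriv hφ hφ' hpos V).deriv]
  exact div_neg_of_neg_of_pos (hneg _) (pow_pos (hpos _) 3)

theorem strictConcaveOn (hI : IsSeriesCharacteristic φ R I)
    (hφ : ∀ w, HasDerivAt φ (φ' w) w) (hφ' : ∀ w, HasDerivAt φ' (φ'' w) w)
    (hpos : ∀ w, 0 < 1 - R * φ' w) (hneg : ∀ w, φ'' w < 0) : StrictConcaveOn ℝ univ I :=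
  strictConcaveOn_univ_of_deriv2_neg
    (continuous_iff_continuousAt.2 fun V => (hI.hasDerivAt hφ hpos V).continuousAt)
    (hI.deriv_deriv_neg hφ hφ' hpos hneg)

end IsSeriesCharacteristic

/-- The current delivered by the single-diode circuit without series resistance at voltage `w`:
the photocurrent minus the diode current and the shunt current. -/
noncomputable def diodeCurrent (Iph Io A Gsh w : ℝ) : ℝ :=
  Iph - Io * (Real.exp (w / A) - 1) - Gsh * w

theorem hasDerivAt_diodeCurrent (Iph Io A Gsh w : ℝ) :
    HasDerivAt (diodeCurrent Iph Io A Gsh) (-(Io * Real.exp (w / A) / A) - Gsh) w := by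
  have hexp := ((hasDerivAt_id' w).div_const A).exp
  refine ((((hexp.sub_const 1).const_mul Io).const_sub Iph).fun_sub
    ((hasDerivAt_id' w).const_mul Gsh)).congr_deriv ?_
  ring

theorem hasDerivAt_deriv_diodeCurrent (Io A Gsh w : ℝ) :
    HasDerivAt (fun w => -(Io * Real.exp (w / A) / A) - Gsh)
      (-(Io * Real.exp (w / A) / A ^ 2)) w := by
  have hexp := ((hasDerivAt_id' w).div_const A).exp
  refine (((hexp.const_mul Io).div_const A).fun_neg.sub_const Gsh).congr_deriv ?_
  ring

theorem one_sub_mul_deriv_diodeCurrent_pos {Io A Rs Gsh : ℝ} (hIo : 0 ≤ Io) (hA : 0 ≤ A)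
    (hRs : 0 ≤ Rs) (hRG : 0 < 1 + Rs * Gsh) (w : ℝ) :
    0 < 1 - Rs * (-(Io * Real.exp (w / A) / A) - Gsh) := by
  have : 0 ≤ Rs * (Io * Real.exp (w / A) / A) := by positivity
  linarith

theorem isSeriesCharacteristic_diodeCurrent_iff {Iph Io A Rs Gsh : ℝ} {I : ℝ → ℝ} :
    IsSeriesCharacteristic (diodeCurrent Iph Io A Gsh) Rs I ↔ ∀ V, Iph =
      Io * (Real.exp ((V + Rs * I V) / A) - 1) + Gsh * (V + Rs * I V) + I V := by
  refine forall_congr' fun V => ?_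
  rw [diodeCurrent]
  constructor <;> intro h <;> linarith

theorem stmt_2_general {Iph Io A Rs Gsh : ℝ}
    (hIo : 0 < Io) (hA : 0 < A) (hRs : 0 ≤ Rs) (hRG : 0 < 1 + Rs * Gsh) {I : ℝ → ℝ}
    (hI : ∀ V, Iph = Io * (Real.exp ((V + Rs * I V) / A) - 1) + Gsh * (V + Rs * I V) + I V) :
    StrictConcaveOn ℝ univ I ∧
    ∀ V, deriv (deriv I) V =
        -(Io * A * Real.exp ((V + Rs * I V) / A)) /
          (A + Rs * (Io * Real.exp ((V + Rs * I V) / A) + A * Gsh)) ^ 3 ∧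
      deriv (deriv I) V < 0 := by
  have hI := isSeriesCharacteristic_diodeCurrent_iff.2 hI
  have hφ := hasDerivAt_diodeCurrent Iph Io A Gsh
  have hφ' := hasDerivAt_deriv_diodeCurrent Io A Gsh
  have hpos := one_sub_mul_deriv_diodeCurrent_pos hIo.le hA.le hRs hRG
  have hneg (w : ℝ) : -(Io * Real.exp (w / A) / A ^ 2) < 0 := neg_neg_of_pos (by positivity)
  refine ⟨hI.strictConcaveOn hφ hφ' hpos hneg, fun V =>
    ⟨?_, hI.deriv_deriv_neg hφ hφ' hpos hneg V⟩⟩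
  have hdenom : A + Rs * (Io * Real.exp ((V + Rs * I V) / A) + A * Gsh) =
      A * (1 - Rs * (-(Io * Real.exp ((V + Rs * I V) / A) / A) - Gsh)) := by
    field_simp
    ring
  rw [(hI.hasDerivAt_deriv hφ hφ' hpos V).deriv, hdenom, mul_pow]
  field_simp

/-- The SDM solution function is strictly concave on ℝ; its second derivative at
every V equals the indicated expression, which is strictly negative. -/
theorem stmt_2 (Iph Io A Rs Gsh : ℝ)
    (hIph : 0 < Iph) (hIo : 0 < Io) (hA : 0 < A) (hRs : 0 < Rs) (hGsh : 0 < Gsh)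
    (I : ℝ → ℝ)
    (hI : ∀ V, Iph = Io * (Real.exp ((V + Rs * I V) / A) - 1) + Gsh * (V + Rs * I V) + I V) :
    StrictConcaveOn ℝ Set.univ I ∧
    ∀ V, deriv (deriv I) V =
        -(Io * A * Real.exp ((V + Rs * I V) / A)) /
          (A + Rs * (Io * Real.exp ((V + Rs * I V) / A) + A * Gsh)) ^ 3 ∧
      deriv (deriv I) V < 0 :=
  stmt_2_general hIo hA hRs.le (by positivity) hI
end

section
/- Let I_ph, I_o, A > 0 and R_s, G_sh ≥ 0. Let I_SD : ℝ → ℝ be the SDM solution function with parameters (I_ph, I_o, A, R_s, G_sh) and let I_RL : ℝ → ℝ be the SDM solution function with parameters (I_ph, I_o, A, 0, 0) (the null resistive loss model, NRLM). Then for every V ≥ 0 with I_SD(V) ≥ 0 one has I_SD(V) ≤ I_RL(V), and consequently V·I_SD(V) ≤ V·I_RL(V); the photovoltaic power delivered by the SDM never exceeds that of the NRLM with the same I_ph, I_o, A. -/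
/-!
If the circuit with larger resistive losses delivered the strictly larger current `I₂ > I₁`, with
`I₂ ≥ 0`, then its junction voltage `V + r₂ * I₂` would be at least `V + r₁ * I₁`. Its diode and
shunt would therefore absorb at least as much of the common photocurrent, leaving at most `I₁` for
the terminals.
-/

theorem current_le_current_of_junction_law_le {R : Type*} [Ring R] [LinearOrder R]
    [IsOrderedRing R] {f g : R → R} {r₁ r₂ V I₁ I₂ : R} (hf : Monotone f)
    (hfg : ∀ v, 0 ≤ v → f v ≤ g v) (hr₁ : 0 ≤ r₁) (hr : r₁ ≤ r₂) (hV : 0 ≤ V) (hI₂ : 0 ≤ I₂)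
    (h : g (V + r₂ * I₂) + I₂ ≤ f (V + r₁ * I₁) + I₁) : I₂ ≤ I₁ := by
  by_contra! hlt
  have junction_voltage_le : V + r₁ * I₁ ≤ V + r₂ * I₂ := by
    calc V + r₁ * I₁ ≤ V + r₁ * I₂ := by gcongr
      _ ≤ V + r₂ * I₂ := by gcongr
  have junction_voltage_nonneg : 0 ≤ V + r₂ * I₂ :=
    add_nonneg hV (mul_nonneg (hr₁.trans hr) hI₂)
  have junction_current_le : f (V + r₁ * I₁) ≤ g (V + r₂ * I₂) :=
    (hf junction_voltage_le).trans (hfg _ junction_voltage_nonneg)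
  exact (add_lt_add_of_le_of_lt junction_current_le hlt).not_ge h

/-- The current lost inside the cell at junction voltage `v`: the Shockley diode current plus the
current through the shunt conductance `Gsh`. -/
noncomputable def darkCurrent (Io A Gsh v : ℝ) : ℝ :=
  Io * (Real.exp (v / A) - 1) + Gsh * v

theorem darkCurrent_monotone {Io A Gsh : ℝ} (hIo : 0 ≤ Io) (hA : 0 ≤ A) (hGsh : 0 ≤ Gsh) :
    Monotone (darkCurrent Io A Gsh) := by
  intro v w hvw
  unfold darkCurrent
  gcongr

theorem darkCurrent_le_darkCurrent_of_shunt_le {Gsh₁ Gsh₂ v : ℝ} (Io A : ℝ)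
    (hGsh : Gsh₁ ≤ Gsh₂) (hv : 0 ≤ v) : darkCurrent Io A Gsh₁ v ≤ darkCurrent Io A Gsh₂ v := by
  unfold darkCurrent
  gcongr

/-- `I` is a solution function of the single-diode model: at every terminal voltage `V`, the
photocurrent `Iph` splits into the dark current at junction voltage `V + Rs * I V` and the terminal
current `I V`. Neither existence nor uniqueness of `I` is part of the definition. -/
def IsSDMSolution (Iph Io A Rs Gsh : ℝ) (I : ℝ → ℝ) : Prop :=
  ∀ V, Iph = darkCurrent Io A Gsh (V + Rs * I V) + I V

theorem isSDMSolution_zero_zero_iff {Iph Io A : ℝ} {I : ℝ → ℝ} :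
    IsSDMSolution Iph Io A 0 0 I ↔ ∀ V, Iph = Io * (Real.exp (V / A) - 1) + I V := by
  simp only [IsSDMSolution, darkCurrent, zero_mul, add_zero]

theorem stmt_8_general {Iph Io A Rs₁ Rs₂ Gsh₁ Gsh₂ : ℝ} {I₁ I₂ : ℝ → ℝ}
    (hIo : 0 ≤ Io) (hA : 0 < A) (hRs₁ : 0 ≤ Rs₁) (hRs : Rs₁ ≤ Rs₂)
    (hGsh₁ : 0 ≤ Gsh₁) (hGsh : Gsh₁ ≤ Gsh₂)
    (h₁ : IsSDMSolution Iph Io A Rs₁ Gsh₁ I₁) (h₂ : IsSDMSolution Iph Io A Rs₂ Gsh₂ I₂) :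
    ∀ V, 0 ≤ V → 0 ≤ I₂ V → I₂ V ≤ I₁ V ∧ V * I₂ V ≤ V * I₁ V := by
  intro V hV hI₂
  have current_le : I₂ V ≤ I₁ V :=
    current_le_current_of_junction_law_le (darkCurrent_monotone hIo hA.le hGsh₁)
      (fun _ ↦ darkCurrent_le_darkCurrent_of_shunt_le Io A hGsh) hRs₁ hRs hV hI₂
      ((h₂ V).symm.trans (h₁ V)).le
  exact ⟨current_le, mul_le_mul_of_nonneg_left current_le hV⟩

/-- The photovoltaic power delivered by the SDM never exceeds that of the null
resistive loss model (R_s = G_sh = 0) with the same I_ph, I_o, A. -/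
theorem stmt_8 (Iph Io A Rs Gsh : ℝ)
    (hIph : 0 < Iph) (hIo : 0 < Io) (hA : 0 < A) (hRs : 0 ≤ Rs) (hGsh : 0 ≤ Gsh)
    (ISD IRL : ℝ → ℝ)
    (hSD : ∀ V, Iph =
      Io * (Real.exp ((V + Rs * ISD V) / A) - 1) + Gsh * (V + Rs * ISD V) + ISD V)
    (hRL : ∀ V, Iph = Io * (Real.exp (V / A) - 1) + IRL V) :
    ∀ V, 0 ≤ V → 0 ≤ ISD V → ISD V ≤ IRL V ∧ V * ISD V ≤ V * IRL V := by
  exact stmt_8_general hIo.le hA le_rfl hRs le_rfl hGsh (isSDMSolution_zero_zero_iff.2 hRL) hSD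
end

section
/- Let I_sc, V_oc > 0, let 0 < V_x < V_oc and I_sc·(1 − V_x/V_oc) < I_x < I_sc, and define the piecewise-linear curve I(V) := I_sc − ((I_sc − I_x)/V_x)·V for 0 ≤ V ≤ V_x, and I(V) := I_x·(V_oc − V)/(V_oc − V_x) for V_x < V ≤ V_oc. Then the power P(V) = V·I(V) attains its maximum over [0, V_oc] at some point V* satisfying V* ≥ V_oc/2 and I(V*) ≥ I_sc/2. -/
/-!
The curve `I` is the minimum of two lines, hence concave and continuous.
Let `v` maximize `P`. On the chord from `(v, I v)` to `(Voc, I Voc)` the current at `Voc / 2` is so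
large that `v < Voc / 2` would give `P v < P (Voc / 2)`. If `I v < I 0 / 2`, the chord from
`(0, I 0)` to `(v, I v)` crosses the level `I 0 / 2` at a point of larger power than `v`.
Both comparisons come down to `4 * x * (y - x) < y ^ 2` for `2 * x ≠ y`.
-/

open Set

section Concave

variable {𝕜 : Type*} [Field 𝕜] [LinearOrder 𝕜] [IsStrictOrderedRing 𝕜]
  {s : Set 𝕜} {f : 𝕜 → 𝕜} {a b c m n v y : 𝕜}

theorem half_le_of_isMaxOn_mul_of_concaveOn (hf : ConcaveOn 𝕜 s f) (ha : a ∈ s) (ha0 : 0 ≤ a)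
    (hfa : 0 ≤ f a) (hv : v ∈ s) (hfv : 0 < f v) (hmax : IsMaxOn (fun x ↦ x * f x) s v) :
    a / 2 ≤ v := by
  by_contra! hlt
  have hav : 0 < a - v := by linarith
  let t := (a / 2) / (a - v)
  have htav : t * (a - v) = a / 2 := div_mul_cancel₀ _ hav.ne'
  have ht0 : 0 ≤ t := by positivity
  have ht1 : 0 ≤ 1 - t := sub_nonneg.2 <| (div_le_one hav).2 (by linarith)
  have hmid : t • v + (1 - t) • a = a / 2 := by
    simp only [smul_eq_mul]
    linear_combination -htav
  have hmem : a / 2 ∈ s := hmid ▸ hf.1 hv ha ht0 ht1 (add_sub_cancel t 1)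
  have hchord : t * f v ≤ f (a / 2) := by
    have h := hf.2 hv ha ht0 ht1 (add_sub_cancel t 1)
    rw [hmid, smul_eq_mul, smul_eq_mul] at h
    linarith [mul_nonneg ht1 hfa]
  have hvt : v < a / 2 * t := by
    rw [← mul_div_assoc, lt_div_iff₀ hav]
    linarith [sq_pos_of_pos (sub_pos.2 hlt)]
  have hpower : v * f v < a / 2 * f (a / 2) := calc
    v * f v < a / 2 * t * f v := mul_lt_mul_of_pos_right hvt hfv
    _ = a / 2 * (t * f v) := mul_assoc _ _ _
    _ ≤ a / 2 * f (a / 2) := by gcongr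
  exact hpower.not_ge (hmax hmem)

theorem half_apply_zero_le_of_isMaxOn_mul_of_concaveOn (hf : ConcaveOn 𝕜 s f) (h0 : 0 ∈ s)
    (hv : v ∈ s) (hv0 : 0 < v) (hmax : IsMaxOn (fun x ↦ x * f x) s v) :
    f 0 / 2 ≤ f v := by
  by_contra! hlt
  have hfv : 0 ≤ f v := by
    have h : 0 * f 0 ≤ v * f v := hmax h0
    rw [zero_mul] at h
    exact nonneg_of_mul_nonneg_right h hv0
  have hdrop : 0 < f 0 - f v := by linarith
  have hf0 : 0 < f 0 / 2 := by linarith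
  let t := (f 0 / 2) / (f 0 - f v)
  have htdrop : t * (f 0 - f v) = f 0 / 2 := div_mul_cancel₀ _ hdrop.ne'
  have ht0 : 0 ≤ t := by positivity
  have ht1 : 0 ≤ 1 - t := sub_nonneg.2 <| (div_le_one hdrop).2 (by linarith)
  have hpoint : (1 - t) • 0 + t • v = t * v := by simp only [smul_eq_mul, mul_zero, zero_add]
  have hmem : t * v ∈ s := hpoint ▸ hf.1 h0 hv ht1 ht0 (sub_add_cancel 1 t)
  have hchord : f 0 / 2 ≤ f (t * v) := by
    have h := hf.2 h0 hv ht1 ht0 (sub_add_cancel 1 t)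
    rw [hpoint, smul_eq_mul, smul_eq_mul] at h
    linarith
  have hfvt : f v < t * (f 0 / 2) := by
    rw [div_mul_eq_mul_div, lt_div_iff₀ hdrop]
    linarith [sq_pos_of_pos (sub_pos.2 hlt)]
  have hpower : v * f v < t * v * f (t * v) := calc
    v * f v < v * (t * (f 0 / 2)) := mul_lt_mul_of_pos_left hfvt hv0
    _ = t * v * (f 0 / 2) := by ring
    _ ≤ t * v * f (t * v) := by gcongr
  exact hpower.not_ge (hmax hmem)

theorem concaveOn_const_add_mul_sub (hs : Convex 𝕜 s) :
    ConcaveOn 𝕜 s fun x ↦ y + m * (x - c) := by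
  refine ⟨hs, fun x _ z _ p q _ _ hpq ↦ le_of_eq ?_⟩
  simp only [smul_eq_mul]
  linear_combination (y - m * c) * hpq

theorem eqOn_min_of_slope_le (hmn : n ≤ m)
    (hleft : ∀ x ∈ s, x ≤ c → f x = y + m * (x - c))
    (hright : ∀ x ∈ s, c < x → f x = y + n * (x - c)) :
    EqOn f (fun x ↦ min (y + m * (x - c)) (y + n * (x - c))) s := by
  intro x hx
  rcases le_or_gt x c with hxc | hcx
  · rw [hleft x hx hxc, eq_comm, min_eq_left_iff]
    linarith [mul_le_mul_of_nonpos_right hmn (sub_nonpos.2 hxc)]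
  · rw [hright x hx hcx, eq_comm, min_eq_right_iff]
    linarith [mul_le_mul_of_nonneg_right hmn (sub_pos.2 hcx).le]

theorem neg_div_sub_le_neg_sub_div_of_chord_le (hc : 0 < c) (hca : c < a)
    (hchord : b * (1 - c / a) ≤ y) : -(y / (a - c)) ≤ -((b - y) / c) := by
  have ha : 0 < a := hc.trans hca
  rw [neg_le_neg_iff, div_le_div_iff₀ hc (sub_pos.2 hca)]
  have hscaled : b * (a - c) ≤ y * a := by
    rwa [one_sub_div ha.ne', ← mul_div_assoc, div_le_iff₀ ha] at hchord
  linarith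

end Concave

/-- The simplified two-segment I-V curve through `(0, Isc)`, `(Vx, Ix)` and `(Voc, 0)`, with
`(Vx, Ix)` strictly above the chord of the two end points. Nothing is asked of `I` outside
`[0, Voc]`. -/
structure IsTwoSegmentCurve (Isc Voc Vx Ix : ℝ) (I : ℝ → ℝ) : Prop where
  vx_pos : 0 < Vx
  vx_lt_voc : Vx < Voc
  chord_lt : Isc * (1 - Vx / Voc) < Ix
  eq_left : ∀ V, 0 ≤ V → V ≤ Vx → I V = Isc - (Isc - Ix) / Vx * V
  eq_right : ∀ V, Vx < V → V ≤ Voc → I V = Ix * (Voc - V) / (Voc - Vx)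

namespace IsTwoSegmentCurve

variable {Isc Voc Vx Ix : ℝ} {I : ℝ → ℝ}

theorem eqOn_min (hI : IsTwoSegmentCurve Isc Voc Vx Ix I) :
    EqOn I (fun V ↦ min (Ix + -((Isc - Ix) / Vx) * (V - Vx)) (Ix + -(Ix / (Voc - Vx)) * (V - Vx)))
      (Icc 0 Voc) := by
  have hslope := neg_div_sub_le_neg_sub_div_of_chord_le hI.vx_pos hI.vx_lt_voc hI.chord_lt.le
  refine eqOn_min_of_slope_le hslope (fun V hV hle ↦ ?_) (fun V hV hlt ↦ ?_)
  · have hVx : Vx ≠ 0 := hI.vx_pos.ne'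
    rw [hI.eq_left V hV.1 hle]
    field
  · have hgap : Voc - Vx ≠ 0 := (sub_pos.2 hI.vx_lt_voc).ne'
    rw [hI.eq_right V hlt hV.2]
    field

theorem concaveOn (hI : IsTwoSegmentCurve Isc Voc Vx Ix I) : ConcaveOn ℝ (Icc 0 Voc) I :=
  ((concaveOn_const_add_mul_sub (convex_Icc 0 Voc)).inf
    (concaveOn_const_add_mul_sub (convex_Icc 0 Voc))).congr hI.eqOn_min.symm

theorem continuousOn (hI : IsTwoSegmentCurve Isc Voc Vx Ix I) : ContinuousOn I (Icc 0 Voc) :=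
  ContinuousOn.congr (by fun_prop) hI.eqOn_min

theorem apply_zero (hI : IsTwoSegmentCurve Isc Voc Vx Ix I) : I 0 = Isc := by
  rw [hI.eq_left 0 le_rfl hI.vx_pos.le, mul_zero, sub_zero]

theorem apply_voc (hI : IsTwoSegmentCurve Isc Voc Vx Ix I) : I Voc = 0 := by
  rw [hI.eq_right Voc hI.vx_lt_voc le_rfl, sub_self, mul_zero, zero_div]

end IsTwoSegmentCurve

theorem stmt_9_general {Voc : ℝ} {I : ℝ → ℝ} (hVoc : 0 < Voc)
    (hconc : ConcaveOn ℝ (Icc 0 Voc) I) (hcont : ContinuousOn I (Icc 0 Voc))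
    (hI0 : 0 < I 0) (hIVoc : 0 ≤ I Voc) :
    ∃ Vstar ∈ Icc 0 Voc,
      IsMaxOn (fun V ↦ V * I V) (Icc 0 Voc) Vstar ∧ Voc / 2 ≤ Vstar ∧ I 0 / 2 ≤ I Vstar := by
  have hzero : 0 ∈ Icc 0 Voc := left_mem_Icc.2 hVoc.le
  have hend : Voc ∈ Icc 0 Voc := right_mem_Icc.2 hVoc.le
  have hhalf : Voc / 2 ∈ Icc 0 Voc := ⟨by linarith, by linarith⟩
  obtain ⟨v, hv, hmax⟩ :=
    isCompact_Icc.exists_isMaxOn ⟨0, hzero⟩ (continuousOn_id.mul hcont)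
  have hIhalf : 0 < I (Voc / 2) := by
    have h := hconc.2 hzero hend one_half_pos.le one_half_pos.le (add_halves 1)
    simp only [smul_eq_mul, mul_zero, zero_add, one_div_mul_eq_div] at h
    linarith
  have hpower : 0 < v * I v := (mul_pos (half_pos hVoc) hIhalf).trans_le (hmax hhalf)
  have hIv : 0 < I v := pos_of_mul_pos_right hpower hv.1
  have hvhalf : Voc / 2 ≤ v :=
    half_le_of_isMaxOn_mul_of_concaveOn hconc hend hVoc.le hIVoc hv hIv hmax
  exact ⟨v, hv, hmax, hvhalf, half_apply_zero_le_of_isMaxOn_mul_of_concaveOn hconc hzero hv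
    ((half_pos hVoc).trans_le hvhalf) hmax⟩

/-- For the simplified two-segment I-V curve through (0, I_sc), (V_x, I_x) and
(V_oc, 0), the power P(V) = V·I(V) attains its maximum over [0, V_oc] at some
point V* with V* ≥ V_oc/2 and I(V*) ≥ I_sc/2. -/
theorem stmt_9 (Isc Voc Vx Ix : ℝ) (hIsc : 0 < Isc) (hVoc : 0 < Voc)
    (hVx0 : 0 < Vx) (hVxVoc : Vx < Voc)
    (hIx1 : Isc * (1 - Vx / Voc) < Ix) (hIx2 : Ix < Isc)
    (I : ℝ → ℝ)
    (hI1 : ∀ V, 0 ≤ V → V ≤ Vx → I V = Isc - (Isc - Ix) / Vx * V)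
    (hI2 : ∀ V, Vx < V → V ≤ Voc → I V = Ix * (Voc - V) / (Voc - Vx)) :
    ∃ Vstar ∈ Set.Icc (0 : ℝ) Voc,
      IsMaxOn (fun V => V * I V) (Set.Icc 0 Voc) Vstar ∧
      Voc / 2 ≤ Vstar ∧ Isc / 2 ≤ I Vstar := by
  have hI : IsTwoSegmentCurve Isc Voc Vx Ix I := ⟨hVx0, hVxVoc, hIx1, hI1, hI2⟩
  simpa only [hI.apply_zero] using stmt_9_general hVoc hI.concaveOn hI.continuousOn
    (hI.apply_zero.symm ▸ hIsc) hI.apply_voc.ge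
end

section
/- Let I_sc, V_oc > 0 and 0 < R_s < V_oc/I_sc, and define the simplified NSH curve I(V) := I_sc for 0 ≤ V ≤ V_oc − R_s·I_sc, and I(V) := (V_oc − V)/R_s for V_oc − R_s·I_sc < V ≤ V_oc. Then the power P(V) = V·I(V) attains its maximum over [0, V_oc] exactly at V_mp = V_oc − R_s·I_sc with current I(V_mp) = I_sc if 0 < R_s < V_oc/(2·I_sc), and exactly at V_mp = V_oc/2 with current I(V_mp) = V_oc/(2·R_s) if V_oc/(2·I_sc) ≤ R_s < V_oc/I_sc. -/
/-!
On `[0, V_oc]` the NSH current is the minimum of `I_sc` and the line `(V_oc - V) / R_s`, which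
cross at the inflection voltage `V_oc - R_s * I_sc`, so the power is the minimum of the line
`V * I_sc` and the parabola `V * (V_oc - V) / R_s`, whose vertex is `V_oc / 2`. Below the vertex
both strictly increase; up to the inflection voltage the power is the increasing line, and beyond
it the parabola. Hence the power strictly increases up to `max (V_oc - R_s * I_sc) (V_oc / 2)` and
strictly decreases afterwards. The bound `V_oc / (2 * I_sc)` on `R_s` decides which of these two
voltages is the larger one.
-/

open Set

theorem isMaxOn_iff_eq_of_strictMonoOn_of_strictAntiOn {α β : Type*} [LinearOrder α] [Preorder β]
    {f : α → β} {s : Set α} {m x : α} (hm : m ∈ s) (hmono : StrictMonoOn f (s ∩ Iic m))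
    (hanti : StrictAntiOn f (s ∩ Ici m)) (hx : x ∈ s) : IsMaxOn f s x ↔ x = m := by
  have lt_of_ne : ∀ y ∈ s, y ≠ m → f y < f m := by
    intro y hy hne
    rcases hne.lt_or_gt with hlt | hgt
    · exact hmono ⟨hy, hlt.le⟩ ⟨hm, le_rfl⟩ hlt
    · exact hanti ⟨hm, le_rfl⟩ ⟨hy, hgt.le⟩ hgt
  constructor
  · intro hmax
    by_contra hne
    exact (lt_of_ne x hx hne).not_ge (hmax hm)
  · rintro rfl y hy
    rcases eq_or_ne y x with rfl | hne
    · exact le_rfl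
    · exact (lt_of_ne y hy hne).le

section OrderedField

variable {𝕜 : Type*} [Field 𝕜] [LinearOrder 𝕜] [IsStrictOrderedRing 𝕜] {a b c : 𝕜}

theorem half_le_sub_mul_iff (hc : 0 < c) : a / 2 ≤ a - b * c ↔ b ≤ a / (2 * c) := by
  rw [← div_div, le_div_iff₀ hc]
  constructor <;> intro h <;> linarith

theorem sub_mul_le_half_iff (hc : 0 < c) : a - b * c ≤ a / 2 ↔ a / (2 * c) ≤ b := by
  rw [← div_div, div_le_iff₀ hc]
  constructor <;> intro h <;> linarith

theorem strictMonoOn_mul_sub_self (a : 𝕜) :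
    StrictMonoOn (fun x ↦ x * (a - x)) (Iic (a / 2)) := by
  intro x _ y (hy : y ≤ a / 2) hxy
  have hfactor : 0 < (y - x) * (a - x - y) := mul_pos (by linarith) (by linarith)
  change x * (a - x) < y * (a - y)
  linarith

theorem strictAntiOn_mul_sub_self (a : 𝕜) :
    StrictAntiOn (fun x ↦ x * (a - x)) (Ici (a / 2)) := by
  intro x (hx : a / 2 ≤ x) y _ hxy
  have hfactor : 0 < (y - x) * (x + y - a) := mul_pos (by linarith) (by linarith)
  change y * (a - y) < x * (a - x)
  linarith

end OrderedField

section NSH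

variable {𝕜 : Type*} [Field 𝕜] [LinearOrder 𝕜]

/-- The current at voltage `V` on the simplified null-shunt-conductance (NSH) curve. The minimum
encodes the two pieces of the curve when `0 < Rs`; see `nshCurrent_of_le`, `nshCurrent_of_ge`. -/
def nshCurrent (Isc Voc Rs V : 𝕜) : 𝕜 := min Isc ((Voc - V) / Rs)

/-- The power `P(V) = V * I(V)` delivered on the simplified null-shunt-conductance curve. -/
def nshPower (Isc Voc Rs V : 𝕜) : 𝕜 := V * nshCurrent Isc Voc Rs V

variable [IsStrictOrderedRing 𝕜] {Isc Voc Rs V : 𝕜}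

theorem nshCurrent_of_le (hRs : 0 < Rs) (hV : V ≤ Voc - Rs * Isc) :
    nshCurrent Isc Voc Rs V = Isc :=
  min_eq_left <| (le_div_iff₀' hRs).2 (by linarith)

theorem nshCurrent_of_ge (hRs : 0 < Rs) (hV : Voc - Rs * Isc ≤ V) :
    nshCurrent Isc Voc Rs V = (Voc - V) / Rs :=
  min_eq_right <| (div_le_iff₀' hRs).2 (by linarith)

theorem eqOn_nshCurrent (hRs : 0 < Rs) {I : 𝕜 → 𝕜}
    (hI_const : ∀ V, 0 ≤ V → V ≤ Voc - Rs * Isc → I V = Isc)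
    (hI_line : ∀ V, Voc - Rs * Isc < V → V ≤ Voc → I V = (Voc - V) / Rs) :
    EqOn I (nshCurrent Isc Voc Rs) (Icc 0 Voc) := by
  intro V hV
  rcases le_or_gt V (Voc - Rs * Isc) with hle | hgt
  · rw [hI_const V hV.1 hle, nshCurrent_of_le hRs hle]
  · rw [hI_line V hgt hV.2, nshCurrent_of_ge hRs hgt.le]

theorem nshPower_of_nonneg (hV : 0 ≤ V) :
    nshPower Isc Voc Rs V = min (V * Isc) (V * (Voc - V) / Rs) := by
  rw [nshPower, nshCurrent, mul_min_of_nonneg _ _ hV, mul_div_assoc]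

theorem strictMonoOn_nshPower (hIsc : 0 < Isc) (hRs : 0 < Rs) :
    StrictMonoOn (nshPower Isc Voc Rs) (Icc 0 (max (Voc - Rs * Isc) (Voc / 2))) := by
  intro x hx y hy hxy
  have hlinear : x * Isc < y * Isc := mul_lt_mul_of_pos_right hxy hIsc
  rcases le_max_iff.1 hy.2 with hinflection | hvertex
  · rwa [nshPower, nshPower, nshCurrent_of_le hRs (hxy.le.trans hinflection),
      nshCurrent_of_le hRs hinflection]
  · rw [nshPower_of_nonneg hx.1, nshPower_of_nonneg hy.1]
    exact min_lt_min hlinear <| div_lt_div_of_pos_right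
      (strictMonoOn_mul_sub_self Voc (hxy.le.trans hvertex) hvertex hxy) hRs

theorem strictAntiOn_nshPower (hRs : 0 < Rs) :
    StrictAntiOn (nshPower Isc Voc Rs) (Ici (max (Voc - Rs * Isc) (Voc / 2))) := by
  intro x hx y hy hxy
  obtain ⟨hx_inflection, hx_vertex⟩ := max_le_iff.1 hx
  obtain ⟨hy_inflection, hy_vertex⟩ := max_le_iff.1 hy
  rw [nshPower, nshPower, nshCurrent_of_ge hRs hx_inflection, nshCurrent_of_ge hRs hy_inflection,
    ← mul_div_assoc, ← mul_div_assoc]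
  exact div_lt_div_of_pos_right (strictAntiOn_mul_sub_self Voc hx_vertex hy_vertex hxy) hRs

theorem isMaxOn_nshPower_iff (hIsc : 0 < Isc) (hRs : 0 < Rs) (hV : V ∈ Icc 0 Voc) :
    IsMaxOn (nshPower Isc Voc Rs) (Icc 0 Voc) V ↔ V = max (Voc - Rs * Isc) (Voc / 2) := by
  have hVoc : 0 ≤ Voc := hV.1.trans hV.2
  have hpeak : max (Voc - Rs * Isc) (Voc / 2) ∈ Icc 0 Voc :=
    ⟨le_max_of_le_right (by linarith),
      max_le (sub_le_self _ (mul_pos hRs hIsc).le) (by linarith)⟩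
  exact isMaxOn_iff_eq_of_strictMonoOn_of_strictAntiOn hpeak
    ((strictMonoOn_nshPower hIsc hRs).mono fun _ h ↦ ⟨h.1.1, h.2⟩)
    ((strictAntiOn_nshPower hRs).mono inter_subset_right) hV

end NSH

theorem stmt_10_general {𝕜 : Type*} [Field 𝕜] [LinearOrder 𝕜] [IsStrictOrderedRing 𝕜]
    (Isc Voc Rs : 𝕜) (hIsc : 0 < Isc) (hVoc : 0 < Voc) (hRs : 0 < Rs)
    (I : 𝕜 → 𝕜)
    (hI1 : ∀ V, 0 ≤ V → V ≤ Voc - Rs * Isc → I V = Isc)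
    (hI2 : ∀ V, Voc - Rs * Isc < V → V ≤ Voc → I V = (Voc - V) / Rs) :
    (Rs < Voc / (2 * Isc) →
      IsMaxOn (fun V ↦ V * I V) (Icc 0 Voc) (Voc - Rs * Isc) ∧
      (∀ V ∈ Icc (0 : 𝕜) Voc,
        IsMaxOn (fun V ↦ V * I V) (Icc 0 Voc) V → V = Voc - Rs * Isc) ∧
      I (Voc - Rs * Isc) = Isc) ∧
    (Voc / (2 * Isc) ≤ Rs →
      IsMaxOn (fun V ↦ V * I V) (Icc 0 Voc) (Voc / 2) ∧
      (∀ V ∈ Icc (0 : 𝕜) Voc,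
        IsMaxOn (fun V ↦ V * I V) (Icc 0 Voc) V → V = Voc / 2) ∧
      I (Voc / 2) = Voc / (2 * Rs)) := by
  have hI : EqOn I (nshCurrent Isc Voc Rs) (Icc 0 Voc) := eqOn_nshCurrent hRs hI1 hI2
  have hP : EqOn (fun V ↦ V * I V) (nshPower Isc Voc Rs) (Icc 0 Voc) :=
    fun V hV ↦ congrArg (V * ·) (hI hV)
  have hmax : ∀ V ∈ Icc 0 Voc, IsMaxOn (fun V ↦ V * I V) (Icc 0 Voc) V ↔
      V = max (Voc - Rs * Isc) (Voc / 2) := fun V hV ↦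
    (hP.eventuallyEq.isMaxFilter_iff (hP hV)).trans (isMaxOn_nshPower_iff hIsc hRs hV)
  constructor
  · intro hlt
    have hvertex : Voc / 2 ≤ Voc - Rs * Isc := (half_le_sub_mul_iff hIsc).2 hlt.le
    have hmem : Voc - Rs * Isc ∈ Icc 0 Voc :=
      ⟨(half_pos hVoc).le.trans hvertex, sub_le_self _ (mul_pos hRs hIsc).le⟩
    rw [max_eq_left hvertex] at hmax
    exact ⟨(hmax _ hmem).2 rfl, fun V hV ↦ (hmax V hV).1,
      (hI hmem).trans (nshCurrent_of_le hRs le_rfl)⟩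
  · intro hle
    have hvertex : Voc - Rs * Isc ≤ Voc / 2 := (sub_mul_le_half_iff hIsc).2 hle
    have hmem : Voc / 2 ∈ Icc 0 Voc := ⟨(half_pos hVoc).le, half_le_self hVoc.le⟩
    rw [max_eq_right hvertex] at hmax
    refine ⟨(hmax _ hmem).2 rfl, fun V hV ↦ (hmax V hV).1, ?_⟩
    rw [hI hmem, nshCurrent_of_ge hRs hvertex, sub_half, div_div]

/-- For the simplified NSH curve, the power P(V) = V·I(V) attains its maximum
over [0, V_oc] exactly at V_mp = V_oc − R_s·I_sc with current I_sc if
0 < R_s < V_oc/(2 I_sc), and exactly at V_mp = V_oc/2 with current V_oc/(2 R_s)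
if V_oc/(2 I_sc) ≤ R_s < V_oc/I_sc. -/
theorem stmt_10 (Isc Voc Rs : ℝ) (hIsc : 0 < Isc) (hVoc : 0 < Voc)
    (hRs0 : 0 < Rs) (hRs1 : Rs < Voc / Isc)
    (I : ℝ → ℝ)
    (hI1 : ∀ V, 0 ≤ V → V ≤ Voc - Rs * Isc → I V = Isc)
    (hI2 : ∀ V, Voc - Rs * Isc < V → V ≤ Voc → I V = (Voc - V) / Rs) :
    (Rs < Voc / (2 * Isc) →
      IsMaxOn (fun V => V * I V) (Set.Icc 0 Voc) (Voc - Rs * Isc) ∧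
      (∀ V ∈ Set.Icc (0 : ℝ) Voc,
        IsMaxOn (fun V => V * I V) (Set.Icc 0 Voc) V → V = Voc - Rs * Isc) ∧
      I (Voc - Rs * Isc) = Isc) ∧
    (Voc / (2 * Isc) ≤ Rs →
      IsMaxOn (fun V => V * I V) (Set.Icc 0 Voc) (Voc / 2) ∧
      (∀ V ∈ Set.Icc (0 : ℝ) Voc,
        IsMaxOn (fun V => V * I V) (Set.Icc 0 Voc) V → V = Voc / 2) ∧
      I (Voc / 2) = Voc / (2 * Rs)) :=
  stmt_10_general Isc Voc Rs hIsc hVoc hRs0 I hI1 hI2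
end

section
/- Fix I_sc, V_oc > 0, 0 ≤ R_s < V_oc/I_sc and 0 ≤ G_sh < I_sc/(V_oc − R_s·I_sc). For A > 0 let I_ph(A) and I_o(A) be the unique parameters for which the SDM curve with parameters (I_ph(A), I_o(A), A, R_s, G_sh) passes through (0, I_sc) and (V_oc, 0), and assume I_ph(A) > 0 for the values of A considered. If 0 < A₁ < A₂, then the corresponding SDM solution functions satisfy I_{A₁}(V) > I_{A₂}(V) for every V ∈ (0, V_oc); consequently the maximum power satisfies max_{V ∈ [0, V_oc]} V·I_{A₁}(V) > max_{V ∈ [0, V_oc]} V·I_{A₂}(V), i.e., the maximum power of the SDM decreases with the equivalent factor of the diode A. -/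
/-!
Measured at the internal voltage `u = V + R_s * I`, the current `F_A u` of the model is explicit,
and all the curves `F_A` pass through `(R_s * I_sc, I_sc)` and `(V_oc, 0)`. Between these two points
`F_A` is an affine function minus a fixed positive multiple of
`(exp (u / A) - exp (a / A)) / (exp (b / A) - exp (a / A))`, where `a = R_s * I_sc` and `b = V_oc`;
neither the affine function nor the multiple depends on `A`. The ratio increases with `A`, because
`exp (u / A₁)` is the strictly convex power `A₂ / A₁` of `exp (u / A₂)`. Hence `F_A` decreases
with `A`, and since `F_A` is a decreasing function the ordering passes to the solutions of
`I = F_A (V + R_s * I)`.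
-/

open Set

section SeriesSolution

variable {𝕜 : Type*} [Field 𝕜] [LinearOrder 𝕜] [IsStrictOrderedRing 𝕜]
  {F G I J : 𝕜 → 𝕜} {r V z i b : 𝕜}

/-- `I` is the current-voltage curve of a device with characteristic `F` in series with a resistance
`r`: at the terminal voltage `V` the device itself is at the voltage `V + r * I V`. -/
def IsSeriesSolution (F : 𝕜 → 𝕜) (r : 𝕜) (I : 𝕜 → 𝕜) : Prop :=
  ∀ V, I V = F (V + r * I V)

namespace IsSeriesSolution

lemma lt_apply (h : IsSeriesSolution F r I) (hF : Antitone F) (hr : 0 ≤ r)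
    (hz : z < F (V + r * z)) : z < I V := by
  by_contra! hle
  have hF_le : F (V + r * z) ≤ F (V + r * I V) := hF (by gcongr)
  exact (hz.trans_le (hF_le.trans_eq (h V).symm)).not_ge hle

lemma apply_eq (h : IsSeriesSolution F r I) (hF : Antitone F) (hr : 0 ≤ r)
    (hz : F (V + r * z) = z) : I V = z := by
  rcases le_total (I V) z with hle | hle
  · have hF_le : F (V + r * z) ≤ F (V + r * I V) := hF (by gcongr)
    rw [hz, ← h V] at hF_le
    exact hle.antisymm hF_le
  · have hF_le : F (V + r * I V) ≤ F (V + r * z) := hF (by gcongr)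
    rw [hz, ← h V] at hF_le
    exact hF_le.antisymm hle

lemma strictMono_add_mul (h : IsSeriesSolution F r I) (hF : Antitone F) (hr : 0 ≤ r) :
    StrictMono fun V ↦ V + r * I V := by
  intro V W hVW
  by_contra! hle
  have hI : I V ≤ I W := by
    rw [h V, h W]
    exact hF hle
  exact hle.not_gt (add_lt_add_of_lt_of_le hVW (by gcongr))

lemma strictAnti (h : IsSeriesSolution F r I) (hF : StrictAnti F) (hr : 0 ≤ r) :
    StrictAnti I := by
  rw [show I = F ∘ fun V ↦ V + r * I V from funext h]
  exact hF.comp_strictMono (h.strictMono_add_mul hF.antitone hr)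

lemma surjective_add_mul (h : IsSeriesSolution F r I) (hF : Antitone F) (hr : 0 ≤ r) :
    Function.Surjective fun V ↦ V + r * I V := by
  intro u
  have hI : I (u - r * F u) = F u := h.apply_eq hF hr (by rw [sub_add_cancel])
  exact ⟨u - r * F u, by simp only [hI, sub_add_cancel]⟩

lemma continuous [TopologicalSpace 𝕜] [OrderTopology 𝕜] (h : IsSeriesSolution F r I)
    (hF : Antitone F) (hFc : Continuous F) (hr : 0 ≤ r) : Continuous I := by
  rw [show I = F ∘ fun V ↦ V + r * I V from funext h]
  exact hFc.comp ((h.strictMono_add_mul hF hr).monotone.continuous_of_surjective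
    (h.surjective_add_mul hF hr))

lemma eq_zero_of_apply_eq_zero (h : IsSeriesSolution F r I) (hF : Antitone F) (hr : 0 ≤ r)
    (hb : F b = 0) : I b = 0 :=
  h.apply_eq hF hr (by rw [mul_zero, add_zero, hb])

lemma pos_of_lt (h : IsSeriesSolution F r I) (hF : StrictAnti F) (hr : 0 ≤ r) (hb : F b = 0)
    (hV : V < b) : 0 < I V := by
  rw [← h.eq_zero_of_apply_eq_zero hF.antitone hr hb]
  exact h.strictAnti hF hr hV

lemma add_mul_mem_Ioo (h : IsSeriesSolution F r I) (hF : Antitone F) (hr : 0 ≤ r)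
    (hi : F (r * i) = i) (hb : F b = 0) (hV : V ∈ Ioo 0 b) : V + r * I V ∈ Ioo (r * i) b := by
  have hI_zero : I 0 = i := h.apply_eq hF hr (by rw [zero_add, hi])
  have hmono := h.strictMono_add_mul hF hr
  constructor
  · simpa only [hI_zero, zero_add] using hmono hV.1
  · simpa only [h.eq_zero_of_apply_eq_zero hF hr hb, mul_zero, add_zero] using hmono hV.2

lemma lt_of_forall_mem_Ioo_lt (hI : IsSeriesSolution F r I) (hJ : IsSeriesSolution G r J)
    (hF : Antitone F) (hG : Antitone G) (hr : 0 ≤ r) (hi : G (r * i) = i) (hb : G b = 0)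
    (hlt : ∀ u ∈ Ioo (r * i) b, G u < F u) (hV : V ∈ Ioo 0 b) : J V < I V := by
  refine hI.lt_apply hF hr ?_
  calc J V = G (V + r * J V) := hJ V
    _ < F (V + r * J V) := hlt _ (hJ.add_mul_mem_Ioo hG hr hi hb hV)

end IsSeriesSolution

end SeriesSolution

lemma strictMonoOn_exp_div_secant_ratio {a x b : ℝ} (hax : a < x) (hxb : x < b) :
    StrictMonoOn (fun A ↦ (Real.exp (x / A) - Real.exp (a / A)) /
      (Real.exp (b / A) - Real.exp (a / A))) (Ioi 0) := by
  intro A₁ (hA₁ : 0 < A₁) A₂ (hA₂ : 0 < A₂) hA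
  have exp_div_lt {A y z : ℝ} (hA : 0 < A) (hyz : y < z) : Real.exp (y / A) < Real.exp (z / A) :=
    Real.exp_lt_exp.2 (div_lt_div_of_pos_right hyz hA)
  have exp_div_eq_rpow (y : ℝ) : Real.exp (y / A₁) = Real.exp (y / A₂) ^ (A₂ / A₁) := by
    rw [← Real.exp_mul, div_mul_div_cancel₀ hA₂.ne']
  have secant_lt := (strictConvexOn_rpow ((one_lt_div hA₁).2 hA)).secant_strict_mono
    (Real.exp_pos (a / A₂)).le (Real.exp_pos (x / A₂)).le (Real.exp_pos (b / A₂)).le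
    (exp_div_lt hA₂ hax).ne' (exp_div_lt hA₂ (hax.trans hxb)).ne' (exp_div_lt hA₂ hxb)
  simp only [← exp_div_eq_rpow] at secant_lt
  rw [div_lt_div_iff₀ (sub_pos.2 (exp_div_lt hA₂ hax))
    (sub_pos.2 (exp_div_lt hA₂ (hax.trans hxb)))] at secant_lt
  rw [div_lt_div_iff₀ (sub_pos.2 (exp_div_lt hA₁ (hax.trans hxb)))
    (sub_pos.2 (exp_div_lt hA₂ (hax.trans hxb)))]
  linarith

section DiodeCharacteristic

/-- The current of the single-diode model as a function of the internal voltage `u = V + R_s * I`,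
with photocurrent `Iph`, saturation current `Io`, diode factor `A` and shunt conductance `G`. -/
noncomputable def diodeCharacteristic (Iph Io A G u : ℝ) : ℝ :=
  Iph - Io * (Real.exp (u / A) - 1) - G * u

variable {Iph Io A G : ℝ}

lemma isSeriesSolution_diodeCharacteristic_iff {r : ℝ} {I : ℝ → ℝ} :
    IsSeriesSolution (diodeCharacteristic Iph Io A G) r I ↔
      ∀ V, Iph = Io * (Real.exp ((V + r * I V) / A) - 1) + G * (V + r * I V) + I V := by
  refine forall_congr' fun V ↦ ?_
  rw [diodeCharacteristic]
  constructor <;> intro h <;> linarith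

lemma diodeCharacteristic_sub (u v : ℝ) :
    diodeCharacteristic Iph Io A G u - diodeCharacteristic Iph Io A G v =
      Io * (Real.exp (v / A) - Real.exp (u / A)) + G * (v - u) := by
  simp only [diodeCharacteristic]
  ring

lemma continuous_diodeCharacteristic : Continuous (diodeCharacteristic Iph Io A G) := by
  unfold diodeCharacteristic
  fun_prop

lemma strictAnti_diodeCharacteristic (hIo : 0 < Io) (hA : 0 < A) (hG : 0 ≤ G) :
    StrictAnti (diodeCharacteristic Iph Io A G) := by
  intro u v huv
  have hexp : Real.exp (u / A) < Real.exp (v / A) := by gcongr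
  rw [← sub_pos, diodeCharacteristic_sub]
  exact add_pos_of_pos_of_nonneg (mul_pos hIo (sub_pos.2 hexp)) (mul_nonneg hG (sub_pos.2 huv).le)

lemma diodeCharacteristic_lt_of_eq_endpoints {Iph₁ Iph₂ Io₁ Io₂ A₁ A₂ a x b : ℝ}
    (hIo₁ : 0 < Io₁) (hA₁ : 0 < A₁) (hA : A₁ < A₂)
    (ha : diodeCharacteristic Iph₁ Io₁ A₁ G a = diodeCharacteristic Iph₂ Io₂ A₂ G a)
    (hb : diodeCharacteristic Iph₁ Io₁ A₁ G b = diodeCharacteristic Iph₂ Io₂ A₂ G b)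
    (hx : x ∈ Ioo a b) :
    diodeCharacteristic Iph₂ Io₂ A₂ G x < diodeCharacteristic Iph₁ Io₁ A₁ G x := by
  have hA₂ : 0 < A₂ := hA₁.trans hA
  have secant_pos {A : ℝ} (hA : 0 < A) : 0 < Real.exp (b / A) - Real.exp (a / A) :=
    sub_pos.2 (Real.exp_lt_exp.2 (div_lt_div_of_pos_right (hx.1.trans hx.2) hA))
  have drop_eq : Io₁ * (Real.exp (b / A₁) - Real.exp (a / A₁)) =
      Io₂ * (Real.exp (b / A₂) - Real.exp (a / A₂)) := by
    have h₁ := diodeCharacteristic_sub (Iph := Iph₁) (Io := Io₁) (A := A₁) (G := G) a b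
    have h₂ := diodeCharacteristic_sub (Iph := Iph₂) (Io := Io₂) (A := A₂) (G := G) a b
    linarith
  have diode_lt : Io₁ * (Real.exp (x / A₁) - Real.exp (a / A₁)) <
      Io₂ * (Real.exp (x / A₂) - Real.exp (a / A₂)) := by
    calc Io₁ * (Real.exp (x / A₁) - Real.exp (a / A₁))
        = Io₁ * (Real.exp (b / A₁) - Real.exp (a / A₁)) *
            ((Real.exp (x / A₁) - Real.exp (a / A₁)) /
              (Real.exp (b / A₁) - Real.exp (a / A₁))) := by
          rw [mul_assoc, mul_div_cancel₀ _ (secant_pos hA₁).ne']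
      _ < Io₁ * (Real.exp (b / A₁) - Real.exp (a / A₁)) *
            ((Real.exp (x / A₂) - Real.exp (a / A₂)) /
              (Real.exp (b / A₂) - Real.exp (a / A₂))) :=
          mul_lt_mul_of_pos_left (strictMonoOn_exp_div_secant_ratio hx.1 hx.2 hA₁ hA₂ hA)
            (mul_pos hIo₁ (secant_pos hA₁))
      _ = Io₂ * (Real.exp (x / A₂) - Real.exp (a / A₂)) := by
          rw [drop_eq, mul_assoc, mul_div_cancel₀ _ (secant_pos hA₂).ne']
  have h₁ := diodeCharacteristic_sub (Iph := Iph₁) (Io := Io₁) (A := A₁) (G := G) a x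
  have h₂ := diodeCharacteristic_sub (Iph := Iph₂) (Io := Io₂) (A := A₂) (G := G) a x
  linarith

end DiodeCharacteristic

section PinnedCharacteristic

/-- The saturation current `I_o` for which the single-diode curve passes through `(0, I_sc)` and
`(V_oc, 0)`. -/
noncomputable def saturationCurrent (Isc Voc Rs Gsh A : ℝ) : ℝ :=
  (Isc - Gsh * (Voc - Rs * Isc)) / (Real.exp (Voc / A) - Real.exp (Rs * Isc / A))

/-- The photocurrent `I_ph` for which the single-diode curve passes through `(0, I_sc)` and
`(V_oc, 0)`. -/
noncomputable def photocurrent (Isc Voc Rs Gsh A : ℝ) : ℝ :=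
  ((Rs * Gsh + 1) * Isc * Real.exp (Voc / A) - Gsh * Voc * Real.exp (Rs * Isc / A)
    - (Rs * Gsh + 1) * Isc + Gsh * Voc) / (Real.exp (Voc / A) - Real.exp (Rs * Isc / A))

/-- The diode characteristic determined by the short- and open-circuit points; in the internal
voltage these points are `(R_s * I_sc, I_sc)` and `(V_oc, 0)`. -/
noncomputable def pinnedCharacteristic (Isc Voc Rs Gsh A : ℝ) : ℝ → ℝ :=
  diodeCharacteristic (photocurrent Isc Voc Rs Gsh A) (saturationCurrent Isc Voc Rs Gsh A) A Gsh

variable {Isc Voc Rs Gsh A A₁ A₂ : ℝ}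

lemma exp_div_sub_exp_div_pos (hRs : Rs * Isc < Voc) (hA : 0 < A) :
    0 < Real.exp (Voc / A) - Real.exp (Rs * Isc / A) :=
  sub_pos.2 (Real.exp_lt_exp.2 (div_lt_div_of_pos_right hRs hA))

lemma saturationCurrent_pos (hRs : Rs * Isc < Voc) (hGsh : Gsh * (Voc - Rs * Isc) < Isc)
    (hA : 0 < A) : 0 < saturationCurrent Isc Voc Rs Gsh A :=
  div_pos (sub_pos.2 hGsh) (exp_div_sub_exp_div_pos hRs hA)

lemma pinnedCharacteristic_shortCircuit (hRs : Rs * Isc < Voc) (hA : 0 < A) :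
    pinnedCharacteristic Isc Voc Rs Gsh A (Rs * Isc) = Isc := by
  have hne := (exp_div_sub_exp_div_pos hRs hA).ne'
  rw [pinnedCharacteristic, diodeCharacteristic, photocurrent, saturationCurrent]
  field_simp
  ring

lemma pinnedCharacteristic_openCircuit (hRs : Rs * Isc < Voc) (hA : 0 < A) :
    pinnedCharacteristic Isc Voc Rs Gsh A Voc = 0 := by
  have hne := (exp_div_sub_exp_div_pos hRs hA).ne'
  rw [pinnedCharacteristic, diodeCharacteristic, photocurrent, saturationCurrent]
  field_simp
  ring

lemma strictAnti_pinnedCharacteristic (hRs : Rs * Isc < Voc) (hGsh₀ : 0 ≤ Gsh)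
    (hGsh : Gsh * (Voc - Rs * Isc) < Isc) (hA : 0 < A) :
    StrictAnti (pinnedCharacteristic Isc Voc Rs Gsh A) :=
  strictAnti_diodeCharacteristic (saturationCurrent_pos hRs hGsh hA) hA hGsh₀

lemma pinnedCharacteristic_lt {u : ℝ} (hGsh : Gsh * (Voc - Rs * Isc) < Isc) (hA₁ : 0 < A₁)
    (hA : A₁ < A₂) (hu : u ∈ Ioo (Rs * Isc) Voc) :
    pinnedCharacteristic Isc Voc Rs Gsh A₂ u < pinnedCharacteristic Isc Voc Rs Gsh A₁ u := by
  have hRs : Rs * Isc < Voc := hu.1.trans hu.2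
  have hA₂ : 0 < A₂ := hA₁.trans hA
  refine diodeCharacteristic_lt_of_eq_endpoints (saturationCurrent_pos hRs hGsh hA₁) hA₁ hA ?_ ?_ hu
  · exact (pinnedCharacteristic_shortCircuit hRs hA₁).trans
      (pinnedCharacteristic_shortCircuit hRs hA₂).symm
  · exact (pinnedCharacteristic_openCircuit hRs hA₁).trans
      (pinnedCharacteristic_openCircuit hRs hA₂).symm

end PinnedCharacteristic

section MaximumPower

lemma exists_isGreatest_image_lt {X α : Type*} [TopologicalSpace X] [LinearOrder α]
    [TopologicalSpace α] [ClosedIciTopology α] {K : Set X} {f g : X → α} {c : α} (hK : IsCompact K)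
    (hf : ContinuousOn f K) (hg : ContinuousOn g K) (hpos : ∃ x ∈ K, c < g x)
    (hlt : ∀ x ∈ K, c < g x → g x < f x) :
    ∃ M N, IsGreatest (f '' K) M ∧ IsGreatest (g '' K) N ∧ N < M := by
  obtain ⟨x₀, hx₀, hcx₀⟩ := hpos
  obtain ⟨M, hM⟩ := (hK.image_of_continuousOn hf).exists_isGreatest ⟨f x₀, mem_image_of_mem f hx₀⟩
  obtain ⟨_, hN⟩ := (hK.image_of_continuousOn hg).exists_isGreatest ⟨g x₀, mem_image_of_mem g hx₀⟩
  obtain ⟨x, hx, rfl⟩ := hN.1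
  have hcx : c < g x := hcx₀.trans_le (hN.2 (mem_image_of_mem g hx₀))
  exact ⟨M, g x, hM, hN, (hlt x hx hcx).trans_le (hM.2 (mem_image_of_mem f hx))⟩

lemma exists_isGreatest_mul_lt {b : ℝ} {f g : ℝ → ℝ} (hf : ContinuousOn f (Icc 0 b))
    (hg : ContinuousOn g (Icc 0 b)) (hgb : g b = 0) (hpos : ∃ x ∈ Ioo 0 b, 0 < g x)
    (hlt : ∀ x ∈ Ioo 0 b, g x < f x) :
    ∃ M N, IsGreatest ((fun x ↦ x * f x) '' Icc 0 b) M ∧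
      IsGreatest ((fun x ↦ x * g x) '' Icc 0 b) N ∧ N < M := by
  obtain ⟨x₀, hx₀, hgx₀⟩ := hpos
  refine exists_isGreatest_image_lt isCompact_Icc (continuousOn_id.mul hf) (continuousOn_id.mul hg)
    ⟨x₀, Ioo_subset_Icc_self hx₀, mul_pos hx₀.1 hgx₀⟩ fun x hx hxg ↦ ?_
  have hx_pos : 0 < x := hx.1.lt_of_ne' (left_ne_zero_of_mul hxg.ne')
  have hx_lt : x < b := hx.2.lt_of_ne fun hxb ↦ right_ne_zero_of_mul hxg.ne' (hxb ▸ hgb)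
  exact mul_lt_mul_of_pos_left (hlt x ⟨hx_pos, hx_lt⟩) hx_pos

end MaximumPower

/-- The maximum power of the SDM (passing through the short- and open-circuit
points) decreases with the equivalent factor of the diode A: if A₁ < A₂ then
the corresponding SDM solution functions satisfy I₁(V) > I₂(V) on (0, V_oc),
and the maximum power for A₁ exceeds that for A₂. -/
theorem stmt_14 (Isc Voc Rs Gsh A1 A2 : ℝ)
    (hIsc : 0 < Isc) (hVoc : 0 < Voc)
    (hRs0 : 0 ≤ Rs) (hRs1 : Rs < Voc / Isc)
    (hGsh0 : 0 ≤ Gsh) (hGsh1 : Gsh < Isc / (Voc - Rs * Isc))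
    (hA1 : 0 < A1) (hA12 : A1 < A2)
    (Iph1 Io1 Iph2 Io2 : ℝ)
    (hIo1 : Io1 = (Isc - Gsh * (Voc - Rs * Isc)) /
        (Real.exp (Voc / A1) - Real.exp (Rs * Isc / A1)))
    (hIph1 : Iph1 = ((Rs * Gsh + 1) * Isc * Real.exp (Voc / A1)
        - Gsh * Voc * Real.exp (Rs * Isc / A1)
        - (Rs * Gsh + 1) * Isc + Gsh * Voc) /
        (Real.exp (Voc / A1) - Real.exp (Rs * Isc / A1)))
    (hIo2 : Io2 = (Isc - Gsh * (Voc - Rs * Isc)) /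
        (Real.exp (Voc / A2) - Real.exp (Rs * Isc / A2)))
    (hIph2 : Iph2 = ((Rs * Gsh + 1) * Isc * Real.exp (Voc / A2)
        - Gsh * Voc * Real.exp (Rs * Isc / A2)
        - (Rs * Gsh + 1) * Isc + Gsh * Voc) /
        (Real.exp (Voc / A2) - Real.exp (Rs * Isc / A2)))
    (hIph1pos : 0 < Iph1) (hIph2pos : 0 < Iph2)
    (I1 I2 : ℝ → ℝ)
    (hI1 : ∀ V, Iph1 =
      Io1 * (Real.exp ((V + Rs * I1 V) / A1) - 1) + Gsh * (V + Rs * I1 V) + I1 V)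
    (hI2 : ∀ V, Iph2 =
      Io2 * (Real.exp ((V + Rs * I2 V) / A2) - 1) + Gsh * (V + Rs * I2 V) + I2 V) :
    (∀ V ∈ Set.Ioo (0 : ℝ) Voc, I2 V < I1 V) ∧
    ∃ M1 M2 : ℝ,
      IsGreatest ((fun V => V * I1 V) '' Set.Icc 0 Voc) M1 ∧
      IsGreatest ((fun V => V * I2 V) '' Set.Icc 0 Voc) M2 ∧
      M2 < M1 := by
  have hRs : Rs * Isc < Voc := (lt_div_iff₀ hIsc).1 hRs1
  have hGsh : Gsh * (Voc - Rs * Isc) < Isc := (lt_div_iff₀ (sub_pos.2 hRs)).1 hGsh1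
  have hA2 : 0 < A2 := hA1.trans hA12
  subst hIph1 hIo1 hIph2 hIo2
  have h1 : IsSeriesSolution (pinnedCharacteristic Isc Voc Rs Gsh A1) Rs I1 :=
    isSeriesSolution_diodeCharacteristic_iff.2 hI1
  have h2 : IsSeriesSolution (pinnedCharacteristic Isc Voc Rs Gsh A2) Rs I2 :=
    isSeriesSolution_diodeCharacteristic_iff.2 hI2
  have anti1 := strictAnti_pinnedCharacteristic hRs hGsh0 hGsh hA1
  have anti2 := strictAnti_pinnedCharacteristic hRs hGsh0 hGsh hA2
  have hsc := pinnedCharacteristic_shortCircuit (Gsh := Gsh) hRs hA2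
  have hoc := pinnedCharacteristic_openCircuit (Gsh := Gsh) hRs hA2
  have current_lt : ∀ V ∈ Ioo 0 Voc, I2 V < I1 V := fun V hV ↦
    h1.lt_of_forall_mem_Ioo_lt h2 anti1.antitone anti2.antitone hRs0 hsc hoc
      (fun u hu ↦ pinnedCharacteristic_lt hGsh hA1 hA12 hu) hV
  have current_pos : 0 < I2 (Voc / 2) := h2.pos_of_lt anti2 hRs0 hoc (half_lt_self hVoc)
  exact ⟨current_lt, exists_isGreatest_mul_lt
    (h1.continuous anti1.antitone continuous_diodeCharacteristic hRs0).continuousOn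
    (h2.continuous anti2.antitone continuous_diodeCharacteristic hRs0).continuousOn
    (h2.eq_zero_of_apply_eq_zero anti2.antitone hRs0 hoc)
    ⟨Voc / 2, ⟨half_pos hVoc, half_lt_self hVoc⟩, current_pos⟩ current_lt⟩
end

section
/- Let V_oc > 0 and A > 0. Then there exists exactly one V_mp > 0 satisfying (1 + V_mp/A)·exp(V_mp/A) = exp(V_oc/A), and this V_mp satisfies V_oc/2 < V_mp < V_oc. -/
/-!
In the dimensionless variables `x = V_mp / A` and `c = V_oc / A` the equation reads
`(1 + x) * exp x = exp c`. The left side increases strictly from `1` to `∞` on `(0, ∞)`, which gives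
existence and uniqueness, and the bounds follow by comparing exponents in
`exp x < (1 + x) * exp x < exp x * exp x`.
-/

open Set Filter

theorem hasDerivAt_one_add_mul_exp (x : ℝ) :
    HasDerivAt (fun t : ℝ ↦ (1 + t) * Real.exp t) ((2 + x) * Real.exp x) x :=
  (((hasDerivAt_id' x).const_add 1).mul (Real.hasDerivAt_exp x)).congr_deriv (by ring)

theorem strictMonoOn_one_add_mul_exp :
    StrictMonoOn (fun x : ℝ ↦ (1 + x) * Real.exp x) (Ici (-2)) := by
  refine strictMonoOn_of_deriv_pos (convex_Ici _) (by fun_prop) fun x hx ↦ ?_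
  rw [interior_Ici, mem_Ioi, neg_lt_iff_pos_add'] at hx
  rw [(hasDerivAt_one_add_mul_exp x).deriv]
  exact mul_pos hx (Real.exp_pos x)

theorem tendsto_one_add_mul_exp_atTop :
    Tendsto (fun x : ℝ ↦ (1 + x) * Real.exp x) atTop atTop :=
  (tendsto_atTop_add_const_left atTop 1 tendsto_id).atTop_mul_atTop₀ Real.tendsto_exp_atTop

theorem bijOn_one_add_mul_exp_Ioi {a : ℝ} (ha : -2 ≤ a) :
    BijOn (fun x : ℝ ↦ (1 + x) * Real.exp x) (Ioi a) (Ioi ((1 + a) * Real.exp a)) := by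
  have strictMonoOn_Ici := strictMonoOn_one_add_mul_exp.mono (Ici_subset_Ici.mpr ha)
  refine ⟨fun x hx ↦ strictMonoOn_Ici self_mem_Ici (Ioi_subset_Ici_self hx) hx,
    (strictMonoOn_Ici.mono Ioi_subset_Ici_self).injOn, ?_⟩
  exact intermediate_value_Ioi (by fun_prop) tendsto_one_add_mul_exp_atTop

theorem existsUnique_pos_one_add_mul_exp_eq {y : ℝ} (hy : 1 < y) :
    ∃! x : ℝ, 0 < x ∧ (1 + x) * Real.exp x = y := by
  have hbij : BijOn (fun x : ℝ ↦ (1 + x) * Real.exp x) (Ioi 0) (Ioi 1) := by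
    simpa only [add_zero, Real.exp_zero, mul_one] using
      bijOn_one_add_mul_exp_Ioi (a := 0) (by norm_num)
  obtain ⟨x, hx, hxy⟩ := hbij.surjOn hy
  exact ⟨x, ⟨hx, hxy⟩, fun z ⟨hz, hzy⟩ ↦ hbij.injOn hz hx (hzy.trans hxy.symm)⟩

theorem half_lt_of_one_add_mul_exp_eq_exp {x c : ℝ} (hx : x ≠ 0)
    (h : (1 + x) * Real.exp x = Real.exp c) : c / 2 < x := by
  have exp_lt : Real.exp c < Real.exp (x + x) := calc
    Real.exp c = (x + 1) * Real.exp x := by rw [← h, add_comm]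
    _ < Real.exp x * Real.exp x := by gcongr; exact Real.add_one_lt_exp hx
    _ = Real.exp (x + x) := (Real.exp_add x x).symm
  linarith [Real.exp_lt_exp.mp exp_lt]

theorem lt_of_one_add_mul_exp_eq_exp {x c : ℝ} (hx : 0 < x)
    (h : (1 + x) * Real.exp x = Real.exp c) : x < c := by
  rw [← Real.exp_lt_exp, ← h]
  exact lt_mul_of_one_lt_left (Real.exp_pos x) (lt_add_of_pos_right 1 hx)

/-- There is exactly one V_mp > 0 satisfying
(1 + V_mp/A)·exp(V_mp/A) = exp(V_oc/A), and it lies in (V_oc/2, V_oc). -/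
theorem stmt_15 (Voc A : ℝ) (hVoc : 0 < Voc) (hA : 0 < A) :
    (∃! Vmp : ℝ, 0 < Vmp ∧
      (1 + Vmp / A) * Real.exp (Vmp / A) = Real.exp (Voc / A)) ∧
    ∀ Vmp : ℝ, 0 < Vmp →
      (1 + Vmp / A) * Real.exp (Vmp / A) = Real.exp (Voc / A) →
      Voc / 2 < Vmp ∧ Vmp < Voc := by
  refine ⟨?_, fun Vmp hVmp hmp ↦ ⟨?_, ?_⟩⟩
  · have one_lt_exp : 1 < Real.exp (Voc / A) := Real.one_lt_exp_iff.mpr (div_pos hVoc hA)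
    refine ((Equiv.divRight₀ A hA.ne').existsUnique_congr fun Vmp ↦ ?_).mpr
      (existsUnique_pos_one_add_mul_exp_eq one_lt_exp)
    exact and_congr_left' (div_pos_iff_of_pos_right hA).symm
  · have half_lt := half_lt_of_one_add_mul_exp_eq_exp (div_pos hVmp hA).ne' hmp
    rwa [div_right_comm, div_lt_div_iff_of_pos_right hA] at half_lt
  · exact (div_lt_div_iff_of_pos_right hA).mp (lt_of_one_add_mul_exp_eq_exp (div_pos hVmp hA) hmp)
end

section
/- Let V_oc > 0 and for each A > 0 let V_mp(A) denote the unique positive solution of (1 + V_mp/A)·exp(V_mp/A) = exp(V_oc/A). Then V_mp(A) → V_oc as A → 0⁺ and V_mp(A) → V_oc/2 as A → +∞. Moreover, with I_sc > 0 and I_mp(A) := I_sc·exp(V_oc/A)·V_mp(A) / ((exp(V_oc/A) − 1)·(A + V_mp(A))), one has I_mp(A) → I_sc as A → 0⁺ and I_mp(A) → I_sc/2 as A → +∞. -/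
/-!
In the normalised variable `u = V_mp / A` the defining equation reads `u + log (1 + u) = V_oc / A`,
so `V_mp / V_oc = u / (u + log (1 + u))` and `I_mp / I_sc = u / (u + (1 - exp (-u)))`. Both ratios
have the form `u / (u + g u)` with `g 0 = 0`, `g' 0 = 1` and `g u = o(u)` at infinity, hence tend
to `1` as `u → ∞` and to `1 / 2` as `u → 0`. Since `0 ≤ log (1 + u) ≤ u`, the variable `u` lies
between `V_oc / (2 A)` and `V_oc / A`, so it tends to `∞` as `A → 0⁺` and to `0` as `A → ∞`.
-/

open Filter Topology Asymptotics

theorem tendsto_div_add_of_tendsto_div {α K : Type*} [NormedField K] {l : Filter α} {f g : α → K}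
    {c : K} (hf : ∀ᶠ a in l, f a ≠ 0) (hgf : Tendsto (fun a ↦ g a / f a) l (𝓝 c))
    (hc : 1 + c ≠ 0) : Tendsto (fun a ↦ f a / (f a + g a)) l (𝓝 (1 + c)⁻¹) := by
  refine ((hgf.const_add 1).inv₀ hc).congr' ?_
  filter_upwards [hf] with a ha
  rw [one_add_div ha, inv_div]

theorem tendsto_div_add_of_isLittleO {α K : Type*} [NormedField K] {l : Filter α} {f g : α → K}
    (hf : ∀ᶠ a in l, f a ≠ 0) (hgf : g =o[l] f) : Tendsto (fun a ↦ f a / (f a + g a)) l (𝓝 1) := by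
  simpa using tendsto_div_add_of_tendsto_div hf hgf.tendsto_div_nhds_zero (by simp)

theorem tendsto_div_add_of_hasDerivAt {K : Type*} [NontriviallyNormedField K] {g : K → K} {g' : K}
    (hg : HasDerivAt g g' 0) (hg₀ : g 0 = 0) (hg' : 1 + g' ≠ 0) :
    Tendsto (fun u ↦ u / (u + g u)) (𝓝[≠] 0) (𝓝 (1 + g')⁻¹) := by
  refine tendsto_div_add_of_tendsto_div self_mem_nhdsWithin ?_ hg'
  simpa [hg₀, div_eq_inv_mul] using hg.tendsto_slope_zero

/-- The ratio `V_mp / V_oc` at the maximum power point of the null resistive loss model, as a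
function of the normalised voltage `u = V_mp / A`. Division by zero makes it `0` at `u = 0`, so only
its limit along `𝓝[≠] 0` is meaningful there. -/
noncomputable def nrlVoltageRatio (u : ℝ) : ℝ := u / (u + Real.log (1 + u))

/-- The ratio `I_mp / I_sc` at the maximum power point of the null resistive loss model, as a
function of the normalised voltage `u = V_mp / A`. As for `nrlVoltageRatio`, its value `0` at
`u = 0` is an artefact of division by zero. -/
noncomputable def nrlCurrentRatio (u : ℝ) : ℝ := u / (u + (1 - Real.exp (-u)))

theorem tendsto_nrlVoltageRatio_atTop : Tendsto nrlVoltageRatio atTop (𝓝 1) := by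
  refine tendsto_div_add_of_isLittleO (eventually_ne_atTop 0) ?_
  have h_shift : Tendsto (fun u : ℝ ↦ 1 + u) atTop atTop :=
    tendsto_atTop_add_const_left _ 1 tendsto_id
  exact (Real.isLittleO_log_id_atTop.comp_tendsto h_shift).trans_isBigO <|
    (isLittleO_const_id_atTop 1).isBigO.add (isBigO_refl id atTop)

theorem tendsto_nrlCurrentRatio_atTop : Tendsto nrlCurrentRatio atTop (𝓝 1) := by
  refine tendsto_div_add_of_isLittleO (eventually_ne_atTop 0) ?_
  have h_bdd : (fun u : ℝ ↦ 1 - Real.exp (-u)) =O[atTop] fun _ ↦ (1 : ℝ) :=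
    (Real.tendsto_exp_neg_atTop_nhds_zero.const_sub 1).isBigO_one ℝ
  exact h_bdd.trans_isLittleO (isLittleO_const_id_atTop 1)

theorem tendsto_nrlVoltageRatio_nhdsNE_zero :
    Tendsto nrlVoltageRatio (𝓝[≠] 0) (𝓝 (1 / 2)) := by
  have h_deriv : HasDerivAt (fun u : ℝ ↦ Real.log (1 + u)) 1 0 := by
    simpa using ((hasDerivAt_id (0 : ℝ)).const_add 1).log (by simp)
  have h_lim := tendsto_div_add_of_hasDerivAt h_deriv (by simp) (by norm_num)
  rwa [one_add_one_eq_two, ← one_div] at h_lim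

theorem tendsto_nrlCurrentRatio_nhdsNE_zero :
    Tendsto nrlCurrentRatio (𝓝[≠] 0) (𝓝 (1 / 2)) := by
  have h_deriv : HasDerivAt (fun u : ℝ ↦ 1 - Real.exp (-u)) 1 0 := by
    simpa using (hasDerivAt_neg (0 : ℝ)).exp.const_sub 1
  have h_lim := tendsto_div_add_of_hasDerivAt h_deriv (by simp) (by norm_num)
  rwa [one_add_one_eq_two, ← one_div] at h_lim

section NormalisedEquation

variable {u x : ℝ}

theorem add_log_one_add_eq_of_one_add_mul_exp_eq (hu : -1 < u)
    (h : (1 + u) * Real.exp u = Real.exp x) : u + Real.log (1 + u) = x := by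
  have h_log := congrArg Real.log h
  rwa [Real.log_mul (by linarith) (Real.exp_ne_zero u), Real.log_exp, Real.log_exp, add_comm]
    at h_log

theorem le_of_one_add_mul_exp_eq (hu : 0 ≤ u) (h : (1 + u) * Real.exp u = Real.exp x) : u ≤ x := by
  have h_log : 0 ≤ Real.log (1 + u) := Real.log_nonneg (by linarith)
  linarith [add_log_one_add_eq_of_one_add_mul_exp_eq (by linarith) h]

theorem half_le_of_one_add_mul_exp_eq (hu : -1 < u) (h : (1 + u) * Real.exp u = Real.exp x) :
    x / 2 ≤ u := by
  have h_log : Real.log (1 + u) ≤ (1 + u) - 1 := Real.log_le_sub_one_of_pos (by linarith)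
  linarith [add_log_one_add_eq_of_one_add_mul_exp_eq hu h]

end NormalisedEquation

section NormalisedLimits

variable {α : Type*} {l : Filter α} {u x : α → ℝ}

theorem tendsto_atTop_of_one_add_mul_exp_eq (hu : ∀ᶠ a in l, -1 < u a)
    (h : ∀ᶠ a in l, (1 + u a) * Real.exp (u a) = Real.exp (x a)) (hx : Tendsto x l atTop) :
    Tendsto u l atTop := by
  refine tendsto_atTop_mono' l ?_ (hx.atTop_div_const two_pos)
  filter_upwards [hu, h] with a ha h_eq using half_le_of_one_add_mul_exp_eq ha h_eq

theorem tendsto_nhdsGT_zero_of_one_add_mul_exp_eq (hu : ∀ᶠ a in l, 0 < u a)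
    (h : ∀ᶠ a in l, (1 + u a) * Real.exp (u a) = Real.exp (x a)) (hx : Tendsto x l (𝓝 0)) :
    Tendsto u l (𝓝[>] 0) := by
  refine tendsto_nhdsWithin_iff.2 ⟨squeeze_zero' (hu.mono fun _ ↦ le_of_lt) ?_ hx, hu⟩
  filter_upwards [hu, h] with a ha h_eq using le_of_one_add_mul_exp_eq ha.le h_eq

end NormalisedLimits

section MaximumPowerPoint

variable {A V Voc : ℝ}

theorem mul_nrlVoltageRatio_eq (hA : A ≠ 0) (hVoc : Voc ≠ 0) (hV : -1 < V / A)
    (h : (1 + V / A) * Real.exp (V / A) = Real.exp (Voc / A)) :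
    Voc * nrlVoltageRatio (V / A) = V := by
  rw [nrlVoltageRatio, add_log_one_add_eq_of_one_add_mul_exp_eq hV h,
    div_div_div_cancel_right₀ hA, mul_div_cancel₀ V hVoc]

theorem mul_nrlCurrentRatio_eq (hA : A ≠ 0) (hV : A + V ≠ 0) (Isc : ℝ)
    (h : (1 + V / A) * Real.exp (V / A) = Real.exp (Voc / A)) :
    Isc * nrlCurrentRatio (V / A) =
      Isc * Real.exp (Voc / A) * V / ((Real.exp (Voc / A) - 1) * (A + V)) := by
  have h_ratio : nrlCurrentRatio (V / A) =
      (Real.exp (V / A) * (V / A)) / (Real.exp (Voc / A) - 1) := by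
    rw [nrlCurrentRatio, ← mul_div_mul_left _ _ (Real.exp_ne_zero (V / A)), ← h]
    congr 1
    rw [Real.exp_neg]
    field_simp
    ring
  have h_exp : A * Real.exp (Voc / A) = (A + V) * Real.exp (V / A) := by
    rw [← h]
    field_simp
  have h_num : Real.exp (Voc / A) * V = Real.exp (V / A) * (V / A) * (A + V) := by
    field_simp
    linear_combination V * h_exp
  rw [h_ratio, mul_assoc Isc, h_num, mul_div_assoc Isc, mul_div_mul_right _ _ hV]

end MaximumPowerPoint

/-- Limits of the NRL maximum power point: V_mp(A) → V_oc as A → 0⁺ and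
V_mp(A) → V_oc/2 as A → +∞; I_mp(A) → I_sc as A → 0⁺ and I_mp(A) → I_sc/2 as
A → +∞. -/
theorem stmt_16 (Voc Isc : ℝ) (hVoc : 0 < Voc) (hIsc : 0 < Isc)
    (Vmp : ℝ → ℝ)
    (hVmp : ∀ A, 0 < A → 0 < Vmp A ∧
      (1 + Vmp A / A) * Real.exp (Vmp A / A) = Real.exp (Voc / A)) :
    Filter.Tendsto Vmp (nhdsWithin 0 (Set.Ioi 0)) (nhds Voc) ∧
    Filter.Tendsto Vmp Filter.atTop (nhds (Voc / 2)) ∧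
    Filter.Tendsto (fun A => Isc * Real.exp (Voc / A) * Vmp A /
        ((Real.exp (Voc / A) - 1) * (A + Vmp A)))
      (nhdsWithin 0 (Set.Ioi 0)) (nhds Isc) ∧
    Filter.Tendsto (fun A => Isc * Real.exp (Voc / A) * Vmp A /
        ((Real.exp (Voc / A) - 1) * (A + Vmp A)))
      Filter.atTop (nhds (Isc / 2)) := by
  choose h_pos h_mpp using hVmp
  have hu : ∀ A, 0 < A → 0 < Vmp A / A := fun A hA ↦ div_pos (h_pos A hA) hA
  have h_near_zero : ∀ᶠ A : ℝ in 𝓝[>] 0, 0 < A := self_mem_nhdsWithin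
  have h_near_top : ∀ᶠ A : ℝ in atTop, 0 < A := eventually_gt_atTop 0
  have hu_top : Tendsto (fun A ↦ Vmp A / A) (𝓝[>] 0) atTop :=
    tendsto_atTop_of_one_add_mul_exp_eq
      (h_near_zero.mono fun A hA ↦ neg_one_lt_zero.trans (hu A hA)) (h_near_zero.mono h_mpp)
      (tendsto_inv_nhdsGT_zero.const_mul_atTop hVoc)
  have hu_zero : Tendsto (fun A ↦ Vmp A / A) atTop (𝓝[≠] 0) :=
    (tendsto_nhdsGT_zero_of_one_add_mul_exp_eq (h_near_top.mono hu) (h_near_top.mono h_mpp)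
      (tendsto_id.const_div_atTop Voc)).mono_right (nhdsGT_le_nhdsNE 0)
  have hV : ∀ A, 0 < A → Voc * nrlVoltageRatio (Vmp A / A) = Vmp A := fun A hA ↦
    mul_nrlVoltageRatio_eq hA.ne' hVoc.ne' (neg_one_lt_zero.trans (hu A hA)) (h_mpp A hA)
  have hI := fun A (hA : 0 < A) ↦
    mul_nrlCurrentRatio_eq hA.ne' (add_pos hA (h_pos A hA)).ne' Isc (h_mpp A hA)
  refine ⟨.congr' (h_near_zero.mono hV) ?_, .congr' (h_near_top.mono hV) ?_,
    .congr' (h_near_zero.mono hI) ?_, .congr' (h_near_top.mono hI) ?_⟩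
  · simpa using (tendsto_nrlVoltageRatio_atTop.comp hu_top).const_mul Voc
  · simpa [div_eq_mul_inv] using (tendsto_nrlVoltageRatio_nhdsNE_zero.comp hu_zero).const_mul Voc
  · simpa using (tendsto_nrlCurrentRatio_atTop.comp hu_top).const_mul Isc
  · simpa [div_eq_mul_inv] using (tendsto_nrlCurrentRatio_nhdsNE_zero.comp hu_zero).const_mul Isc
end

section
/- Let I_sc, V_oc > 0 and A > 0, and let V_mp be the unique positive solution of (1 + V_mp/A)·exp(V_mp/A) = exp(V_oc/A). Set I_mp := I_sc·exp(V_oc/A)·V_mp / ((exp(V_oc/A) − 1)·(A + V_mp)). Then the pair (V_mp, I_mp) satisfies both maximum-power-point equations of the null resistive loss model: −(I_sc − I_mp)·exp(V_oc/A) + I_sc·exp(V_mp/A) − I_mp = 0 and A·I_mp·(exp(V_oc/A) − 1) − I_sc·V_mp·exp(V_mp/A) = 0; moreover I_sc/2 < I_mp < I_sc. -/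
/-!
Consider the current-voltage curve `I(V) = Isc (E - exp (V/A)) / (E - 1)` with `E = exp (Voc/A)`.
Since `E - exp (Vmp/A) = (Vmp/A) exp (Vmp/A)` by the equation defining `Vmp`, the prescribed `Imp`
is just `I(Vmp)`, and the same identity gives the stationarity equation. The upper bound on `Imp`
holds because `I` is decreasing, and the lower one amounts to `2 exp x < (1 + x) exp x + 1` for
`x = Vmp/A`, that is, to the strict inequality `1 - x < exp (-x)`.
-/

open Real

lemma one_sub_mul_exp_lt_one {x : ℝ} (hx : x ≠ 0) : (1 - x) * exp x < 1 :=
  calc (1 - x) * exp x < exp (-x) * exp x :=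
        mul_lt_mul_of_pos_right (one_sub_lt_exp_neg hx) (exp_pos x)
    _ = 1 := by rw [← exp_add, neg_add_cancel, exp_zero]

/-- The current at voltage `V` in the null resistive loss model with modified ideality factor `A`,
after eliminating the photocurrent and the diode saturation current through the short-circuit
point `(0, Isc)` and the open-circuit point `(Voc, 0)`. -/
noncomputable def nullLossCurrent (Isc Voc A V : ℝ) : ℝ :=
  Isc * (exp (Voc / A) - exp (V / A)) / (exp (Voc / A) - 1)

namespace nullLossCurrent

variable {Isc Voc A V : ℝ}

lemma mul_exp_sub_one (hE : exp (Voc / A) ≠ 1) :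
    nullLossCurrent Isc Voc A V * (exp (Voc / A) - 1) =
      Isc * (exp (Voc / A) - exp (V / A)) :=
  div_mul_cancel₀ _ (sub_ne_zero.mpr hE)

lemma model_equation (hE : exp (Voc / A) ≠ 1) :
    -(Isc - nullLossCurrent Isc Voc A V) * exp (Voc / A) + Isc * exp (V / A)
      - nullLossCurrent Isc Voc A V = 0 := by
  linear_combination mul_exp_sub_one (Isc := Isc) (V := V) hE

lemma lt_shortCircuit (hIsc : 0 < Isc) (hVoc : 0 < Voc / A) (hV : 0 < V / A) :
    nullLossCurrent Isc Voc A V < Isc := by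
  have hE : 0 < exp (Voc / A) - 1 := sub_pos.mpr (one_lt_exp_iff.mpr hVoc)
  have he : 1 < exp (V / A) := one_lt_exp_iff.mpr hV
  rw [nullLossCurrent, div_lt_iff₀ hE]
  gcongr

lemma half_shortCircuit_lt_iff (hIsc : 0 < Isc) (hVoc : 0 < Voc / A) :
    Isc / 2 < nullLossCurrent Isc Voc A V ↔ 2 * exp (V / A) < exp (Voc / A) + 1 := by
  have hE : 0 < exp (Voc / A) - 1 := sub_pos.mpr (one_lt_exp_iff.mpr hVoc)
  rw [nullLossCurrent, lt_div_iff₀ hE, div_mul_eq_mul_div, mul_div_assoc,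
    mul_lt_mul_iff_right₀ hIsc]
  constructor <;> intro h <;> linarith

section MaximumPowerPoint

variable (hV : (1 + V / A) * exp (V / A) = exp (Voc / A))
include hV

lemma eq_closed_form (hA : A ≠ 0) :
    nullLossCurrent Isc Voc A V =
      Isc * exp (Voc / A) * V / ((exp (Voc / A) - 1) * (A + V)) := by
  have h_one_add : 1 + V / A ≠ 0 := left_ne_zero_of_mul (hV ▸ exp_ne_zero _)
  have h_add : A + V ≠ 0 := by
    simpa only [mul_add, mul_one, mul_div_cancel₀ V hA] using mul_ne_zero hA h_one_add
  have h_diff : exp (Voc / A) - exp (V / A) = exp (Voc / A) * V / (A + V) := by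
    rw [← hV]
    field_simp
    ring
  rw [nullLossCurrent, h_diff, ← mul_div_assoc, div_div, mul_comm (A + V), mul_assoc]

lemma stationarity_equation (hA : A ≠ 0) (hE : exp (Voc / A) ≠ 1) :
    A * nullLossCurrent Isc Voc A V * (exp (Voc / A) - 1) - Isc * V * exp (V / A) = 0 := by
  rw [mul_assoc, mul_exp_sub_one hE, ← hV]
  field_simp
  ring

lemma half_shortCircuit_lt (hIsc : 0 < Isc) (hVoc : 0 < Voc / A) (hV₀ : V / A ≠ 0) :
    Isc / 2 < nullLossCurrent Isc Voc A V := by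
  rw [half_shortCircuit_lt_iff hIsc hVoc, ← hV]
  linarith [one_sub_mul_exp_lt_one hV₀]

end MaximumPowerPoint

end nullLossCurrent

/-- The pair (V_mp, I_mp) of the null resistive loss model satisfies both
maximum-power-point equations, and I_sc/2 < I_mp < I_sc. -/
theorem stmt_17 (Isc Voc A Vmp Imp : ℝ)
    (hIsc : 0 < Isc) (hVoc : 0 < Voc) (hA : 0 < A)
    (hVmp0 : 0 < Vmp)
    (hVmp : (1 + Vmp / A) * Real.exp (Vmp / A) = Real.exp (Voc / A))
    (hImp : Imp = Isc * Real.exp (Voc / A) * Vmp /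
      ((Real.exp (Voc / A) - 1) * (A + Vmp))) :
    -(Isc - Imp) * Real.exp (Voc / A) + Isc * Real.exp (Vmp / A) - Imp = 0 ∧
    A * Imp * (Real.exp (Voc / A) - 1) - Isc * Vmp * Real.exp (Vmp / A) = 0 ∧
    Isc / 2 < Imp ∧ Imp < Isc := by
  have hVocA : 0 < Voc / A := div_pos hVoc hA
  have hVmpA : 0 < Vmp / A := div_pos hVmp0 hA
  have hE : exp (Voc / A) ≠ 1 := (one_lt_exp_iff.mpr hVocA).ne'
  obtain rfl : Imp = nullLossCurrent Isc Voc A Vmp :=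
    hImp.trans (nullLossCurrent.eq_closed_form hVmp hA.ne').symm
  exact ⟨nullLossCurrent.model_equation hE,
    nullLossCurrent.stationarity_equation hVmp hA.ne' hE,
    nullLossCurrent.half_shortCircuit_lt hVmp hIsc hVocA hVmpA.ne',
    nullLossCurrent.lt_shortCircuit hIsc hVocA hVmpA⟩
end

section
/- Let I_sc, V_oc > 0, let (V_x, I_x) satisfy 0 < V_x < V_oc and I_sc·(1 − V_x/V_oc) < I_x < I_sc, let A > 0 and R_s > 0 satisfy R_s·I_sc < V_x + R_s·I_x < V_oc, and define F_cd(A, R_s) := (V_x − R_s·(I_sc − I_x))·exp(V_oc/A) − (V_oc − R_s·I_sc)·exp((V_x + R_s·I_x)/A) + (V_oc − V_x − R_s·I_x)·exp(R_s·I_sc/A) and F_sh(A, R_s) := (I_sc − I_x)·exp(V_oc/A) − I_sc·exp((V_x + R_s·I_x)/A) + I_x·exp(R_s·I_sc/A). If F_cd(A, R_s) ≠ 0, then the linear system in (I_ph, I_o, G_sh) obtained by imposing the SDM equation at (0, I_sc), at (V_x, I_x) and at (V_oc, 0) has a unique solution, and in it G_sh = F_sh(A, R_s)/F_cd(A, R_s)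 and I_o = (V_x·I_sc + V_oc·I_x − V_oc·I_sc)/F_cd(A, R_s). -/
/-!
For fixed `(A, R_s)` the model equation is linear in `(I_ph, I_o, G_sh)`, so imposing three points
gives a `3 × 3` system with rows `(1, 1 - exp (u / A), -u)`, where `u = V + R_s I`, and right-hand
side `I`. Its determinant is `-F_cd`, and the two formulas are Cramer's rule. The numerator of
`I_o` is, up to sign, twice the area of the triangle with vertices `(u, I)`; the map
`(V, I) ↦ (u, I)` is a shear, so this area does not depend on `R_s`.
-/

section Cramer

variable {n K : Type*} [Fintype n] [DecidableEq n] [Field K]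

theorem mulVec_eq_iff_eq_cramer_div_det {M : Matrix n n K} (hM : M.det ≠ 0) {x b : n → K} :
    M.mulVec x = b ↔ ∀ i, x i = M.cramer b i / M.det := by
  constructor
  · rintro rfl i
    rw [eq_div_iff hM, Matrix.cramer_eq_adjugate_mulVec, Matrix.mulVec_mulVec,
      Matrix.adjugate_mul, Matrix.smul_mulVec, Matrix.one_mulVec, Pi.smul_apply, smul_eq_mul,
      mul_comm]
  · intro h
    have hx : x = M.det⁻¹ • M.cramer b := by
      ext i
      rw [h i, Pi.smul_apply, smul_eq_mul, div_eq_inv_mul]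
    rw [hx, Matrix.mulVec_smul, Matrix.mulVec_cramer, inv_smul_smul₀ hM]

end Cramer

section SingleDiode

variable {K : Type*} [CommRing K]

/-- The single-diode equation at the point `(V, I)`, with series resistance `R` and with an
arbitrary function `φ` of the junction voltage `V + R * I` in place of `u ↦ exp (u / A)`. -/
def SatisfiesSDM (φ : K → K) (R Iph Io Gsh V I : K) : Prop :=
  Iph = Io * (φ (V + R * I) - 1) + Gsh * (V + R * I) + I

/-- The coefficient matrix of the single-diode equations in the unknowns `(Iph, Io, Gsh)`, one
row for each junction voltage `u k`; the right-hand side is the vector of currents. -/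
def sdmMatrix {ι : Type*} (φ : K → K) (u : ι → K) : Matrix ι (Fin 3) K :=
  Matrix.of fun k ↦ ![1, 1 - φ (u k), -u k]

theorem sdmMatrix_mulVec_eq_iff {ι : Type*} {φ : K → K} {R Iph Io Gsh : K} {V I : ι → K} :
    (sdmMatrix φ fun k ↦ V k + R * I k).mulVec ![Iph, Io, Gsh] = I ↔
      ∀ k, SatisfiesSDM φ R Iph Io Gsh (V k) (I k) := by
  simp only [funext_iff, sdmMatrix, SatisfiesSDM, Matrix.mulVec, dotProduct, Fin.sum_univ_three,
    Matrix.of_apply, Matrix.cons_val]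
  refine forall_congr' fun k ↦ ⟨fun h ↦ ?_, fun h ↦ ?_⟩
  · linear_combination h
  · linear_combination h

theorem det_sdmMatrix (φ : K → K) (u : Fin 3 → K) :
    (sdmMatrix φ u).det =
      -((u 1 - u 0) * φ (u 2) - (u 2 - u 0) * φ (u 1) + (u 2 - u 1) * φ (u 0)) := by
  simp only [Matrix.det_fin_three, sdmMatrix, Matrix.of_apply, Matrix.cons_val]
  ring

theorem cramer_sdmMatrix_one (φ : K → K) (R : K) (V I : Fin 3 → K) :
    (sdmMatrix φ fun k ↦ V k + R * I k).cramer I 1 =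
      -((V 1 - V 0) * (I 0 - I 2) - (V 2 - V 0) * (I 0 - I 1)) := by
  simp only [Matrix.cramer_apply, Matrix.det_fin_three, sdmMatrix, Matrix.updateCol_apply,
    Matrix.of_apply, Matrix.cons_val, Fin.reduceEq, if_true, if_false]
  ring

theorem cramer_sdmMatrix_two (φ : K → K) (u I : Fin 3 → K) :
    (sdmMatrix φ u).cramer I 2 =
      -((I 0 - I 1) * φ (u 2) - (I 0 - I 2) * φ (u 1) + (I 1 - I 2) * φ (u 0)) := by
  simp only [Matrix.cramer_apply, Matrix.det_fin_three, sdmMatrix, Matrix.updateCol_apply,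
    Matrix.of_apply, Matrix.cons_val, Fin.reduceEq, if_true, if_false]
  ring

end SingleDiode

section Solution

variable {K : Type*} [Field K]

theorem forall_satisfiesSDM_iff {φ : K → K} {R Iph Io Gsh : K} {V I : Fin 3 → K}
    (hdet : (sdmMatrix φ fun k ↦ V k + R * I k).det ≠ 0) :
    (∀ k, SatisfiesSDM φ R Iph Io Gsh (V k) (I k)) ↔
      letI M := sdmMatrix φ fun k ↦ V k + R * I k
      Iph = M.cramer I 0 / M.det ∧ Io = M.cramer I 1 / M.det ∧ Gsh = M.cramer I 2 / M.det := by
  rw [← sdmMatrix_mulVec_eq_iff, mulVec_eq_iff_eq_cramer_div_det hdet]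
  simp [Fin.forall_fin_succ]

theorem stmt_18_general (φ : K → K) (R Fcd Fsh : K) (V I : Fin 3 → K)
    (hFcd : Fcd = (V 1 - V 0 - R * (I 0 - I 1)) * φ (V 2 + R * I 2)
        - (V 2 - V 0 - R * (I 0 - I 2)) * φ (V 1 + R * I 1)
        + (V 2 - V 1 - R * (I 1 - I 2)) * φ (V 0 + R * I 0))
    (hFsh : Fsh = (I 0 - I 1) * φ (V 2 + R * I 2) - (I 0 - I 2) * φ (V 1 + R * I 1)
        + (I 1 - I 2) * φ (V 0 + R * I 0))
    (hFcdne : Fcd ≠ 0) :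
    (∃! t : K × K × K, ∀ k, SatisfiesSDM φ R t.1 t.2.1 t.2.2 (V k) (I k)) ∧
    ∀ Iph Io Gsh : K, (∀ k, SatisfiesSDM φ R Iph Io Gsh (V k) (I k)) →
      Gsh = Fsh / Fcd ∧
        Io = ((V 1 - V 0) * (I 0 - I 2) - (V 2 - V 0) * (I 0 - I 1)) / Fcd := by
  set M := sdmMatrix φ fun k ↦ V k + R * I k
  have hdet : M.det = -Fcd := by
    rw [det_sdmMatrix, hFcd]
    ring
  have hsolve {Iph Io Gsh : K} := forall_satisfiesSDM_iff (Iph := Iph) (Io := Io) (Gsh := Gsh)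
    (hdet.trans_ne (neg_ne_zero.mpr hFcdne))
  refine ⟨⟨(M.cramer I 0 / M.det, M.cramer I 1 / M.det, M.cramer I 2 / M.det),
    hsolve.mpr ⟨rfl, rfl, rfl⟩, fun t ht ↦ ?_⟩, fun Iph Io Gsh h ↦ ?_⟩
  · obtain ⟨hIph, hIo, hGsh⟩ := hsolve.mp ht
    exact Prod.ext hIph (Prod.ext hIo hGsh)
  · obtain ⟨-, hIo, hGsh⟩ := hsolve.mp h
    rw [hIo, hGsh, hdet, cramer_sdmMatrix_one, cramer_sdmMatrix_two, ← hFsh, neg_div_neg_eq,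
      neg_div_neg_eq]
    exact ⟨rfl, rfl⟩

end Solution

/-- Imposing the SDM equation at (0, I_sc), (V_x, I_x) and (V_oc, 0) yields a
linear system in (I_ph, I_o, G_sh) with a unique solution (when F_cd ≠ 0), in
which G_sh = F_sh/F_cd and I_o = (V_x·I_sc + V_oc·I_x − V_oc·I_sc)/F_cd. -/
theorem stmt_18 (Isc Voc Vx Ix A Rs Fcd Fsh : ℝ)
    (hIsc : 0 < Isc) (hVoc : 0 < Voc) (hVx0 : 0 < Vx) (hVxVoc : Vx < Voc)
    (hIx1 : Isc * (1 - Vx / Voc) < Ix) (hIx2 : Ix < Isc)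
    (hA : 0 < A) (hRs : 0 < Rs)
    (hcond1 : Rs * Isc < Vx + Rs * Ix) (hcond2 : Vx + Rs * Ix < Voc)
    (hFcd : Fcd = (Vx - Rs * (Isc - Ix)) * Real.exp (Voc / A)
        - (Voc - Rs * Isc) * Real.exp ((Vx + Rs * Ix) / A)
        + (Voc - Vx - Rs * Ix) * Real.exp (Rs * Isc / A))
    (hFsh : Fsh = (Isc - Ix) * Real.exp (Voc / A)
        - Isc * Real.exp ((Vx + Rs * Ix) / A)
        + Ix * Real.exp (Rs * Isc / A))
    (hFcdne : Fcd ≠ 0) :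
    (∃! t : ℝ × ℝ × ℝ,
        t.1 = t.2.1 * (Real.exp ((0 + Rs * Isc) / A) - 1) + t.2.2 * (0 + Rs * Isc) + Isc ∧
        t.1 = t.2.1 * (Real.exp ((Vx + Rs * Ix) / A) - 1) + t.2.2 * (Vx + Rs * Ix) + Ix ∧
        t.1 = t.2.1 * (Real.exp ((Voc + Rs * 0) / A) - 1) + t.2.2 * (Voc + Rs * 0) + 0) ∧
    ∀ Iph Io Gsh : ℝ,
      (Iph = Io * (Real.exp ((0 + Rs * Isc) / A) - 1) + Gsh * (0 + Rs * Isc) + Isc ∧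
       Iph = Io * (Real.exp ((Vx + Rs * Ix) / A) - 1) + Gsh * (Vx + Rs * Ix) + Ix ∧
       Iph = Io * (Real.exp ((Voc + Rs * 0) / A) - 1) + Gsh * (Voc + Rs * 0) + 0) →
      Gsh = Fsh / Fcd ∧ Io = (Vx * Isc + Voc * Ix - Voc * Isc) / Fcd := by
  have hnum : Vx * Isc + Voc * Ix - Voc * Isc = Vx * Isc - Voc * (Isc - Ix) := by ring
  simpa [Fin.forall_fin_succ, SatisfiesSDM, hnum] using
    stmt_18_general (fun u ↦ Real.exp (u / A)) Rs Fcd Fsh ![0, Vx, Voc] ![Isc, Ix, 0]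
      (by simpa using hFcd) (by simpa using hFsh) hFcdne
end

section
/- Let I_sc, V_oc > 0, let (V_x, I_x) satisfy 0 < V_x < V_oc and I_sc·(1 − V_x/V_oc) < I_x < I_sc, let A > 0 and R_s > 0 satisfy R_s·I_sc < V_x + R_s·I_x < V_oc, and let (I_ph, I_o, G_sh) be the unique solution of the linear system obtained by imposing the SDM equation at (0, I_sc), (V_x, I_x) and (V_oc, 0) (assuming the system is nondegenerate). If G_sh > 0, then also I_ph > 0 and I_o > 0. -/
/-!
The change of variables `(V, I) ↦ (V + Rs * I, I)` is a shear, so it preserves the signed area of a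
triangle; hence the intermediate point is still above the chord in the `(V + Rs * I, I)` plane. In
that plane the model says that the current is an affine function minus `Io` times a strictly convex
function, so its excess over the chord has the sign of `Io`. Once `0 < Io`, every term on the
right-hand side of the equation at open circuit is nonnegative, and the diode term is positive.
-/

theorem strictConvexOn_exp_div_sub_one {A : ℝ} (hA : A ≠ 0) :
    StrictConvexOn ℝ Set.univ fun u ↦ Real.exp (u / A) - 1 := by
  refine ⟨convex_univ, fun x _ y _ hxy a b ha hb hab ↦ ?_⟩
  have exp_lt := strictConvexOn_exp.2 (Set.mem_univ (x / A)) (Set.mem_univ (y / A))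
    (fun h ↦ hxy ((div_left_inj' hA).1 h)) ha hb hab
  simp only [smul_eq_mul, ← mul_div_assoc, ← add_div] at exp_lt ⊢
  linear_combination exp_lt + hab

section SingleDiode

variable {𝕜 : Type*} [Field 𝕜]

/-- Minus twice the signed area of the triangle `p q r`; when `p.1 < r.1`, it is positive exactly
when `q` lies strictly above the line through `p` and `r`. -/
def chordExcess (p q r : 𝕜 × 𝕜) : 𝕜 :=
  (q.2 - p.2) * (r.1 - q.1) - (r.2 - q.2) * (q.1 - p.1)

/-- The voltage across the diode of a cell with series resistance `Rs`, at the operating point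
`p = (V, I)`. -/
def junctionVoltage (Rs : 𝕜) (p : 𝕜 × 𝕜) : 𝕜 :=
  p.1 + Rs * p.2

/-- The operating point `p = (V, I)` satisfies the single-diode equation, with an arbitrary diode
characteristic `φ` in place of the exponential law `u ↦ exp (u / A) - 1`. -/
def OnDiodeCurve (φ : 𝕜 → 𝕜) (Iph Io Gsh Rs : 𝕜) (p : 𝕜 × 𝕜) : Prop :=
  Iph = Io * φ (junctionVoltage Rs p) + Gsh * junctionVoltage Rs p + p.2

theorem chordExcess_junctionVoltage (Rs : 𝕜) (p q r : 𝕜 × 𝕜) :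
    chordExcess (junctionVoltage Rs p, p.2) (junctionVoltage Rs q, q.2)
      (junctionVoltage Rs r, r.2) = chordExcess p q r := by
  simp only [chordExcess, junctionVoltage]
  ring

theorem OnDiodeCurve.chordExcess_eq {φ : 𝕜 → 𝕜} {Iph Io Gsh Rs : 𝕜} {p q r : 𝕜 × 𝕜}
    (hp : OnDiodeCurve φ Iph Io Gsh Rs p) (hq : OnDiodeCurve φ Iph Io Gsh Rs q)
    (hr : OnDiodeCurve φ Iph Io Gsh Rs r) :
    chordExcess p q r =
      -Io * chordExcess (junctionVoltage Rs p, φ (junctionVoltage Rs p))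
        (junctionVoltage Rs q, φ (junctionVoltage Rs q))
        (junctionVoltage Rs r, φ (junctionVoltage Rs r)) := by
  rw [← chordExcess_junctionVoltage Rs]
  unfold OnDiodeCurve at hp hq hr
  simp only [chordExcess]
  linear_combination
    (junctionVoltage Rs r - junctionVoltage Rs q) * (hp - hq) -
      (junctionVoltage Rs q - junctionVoltage Rs p) * (hq - hr)

variable [LinearOrder 𝕜] [IsStrictOrderedRing 𝕜]

theorem chordExcess_pos_iff {p q r : 𝕜 × 𝕜} (hpr : p.1 < r.1) :
    0 < chordExcess p q r ↔ p.2 + (r.2 - p.2) * ((q.1 - p.1) / (r.1 - p.1)) < q.2 := by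
  rw [← lt_sub_iff_add_lt', ← mul_div_assoc, div_lt_iff₀ (sub_pos.2 hpr), chordExcess]
  constructor <;> intro h <;> linear_combination h

theorem chordExcess_graph_neg {s : Set 𝕜} {φ : 𝕜 → 𝕜} (hφ : StrictConvexOn 𝕜 s φ)
    {x y z : 𝕜} (hx : x ∈ s) (hz : z ∈ s) (hxy : x < y) (hyz : y < z) :
    chordExcess (x, φ x) (y, φ y) (z, φ z) < 0 := by
  have slope_lt := hφ.slope_strict_mono_adjacent hx hz hxy hyz
  rwa [div_lt_div_iff₀ (sub_pos.2 hxy) (sub_pos.2 hyz), ← sub_neg] at slope_lt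

namespace OnDiodeCurve

variable {φ : 𝕜 → 𝕜} {Iph Io Gsh Rs : 𝕜} {p q r : 𝕜 × 𝕜}

theorem saturationCurrent_pos {s : Set 𝕜} (hφ : StrictConvexOn 𝕜 s φ)
    (hp : OnDiodeCurve φ Iph Io Gsh Rs p) (hq : OnDiodeCurve φ Iph Io Gsh Rs q)
    (hr : OnDiodeCurve φ Iph Io Gsh Rs r)
    (hps : junctionVoltage Rs p ∈ s) (hrs : junctionVoltage Rs r ∈ s)
    (hpq : junctionVoltage Rs p < junctionVoltage Rs q)
    (hqr : junctionVoltage Rs q < junctionVoltage Rs r)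
    (hchord : 0 < chordExcess p q r) : 0 < Io := by
  have graph_neg := chordExcess_graph_neg hφ hps hrs hpq hqr
  rw [hp.chordExcess_eq hq hr] at hchord
  exact neg_neg_iff_pos.1 (neg_of_mul_pos_left hchord graph_neg.le)

theorem photocurrent_pos (hp : OnDiodeCurve φ Iph Io Gsh Rs p) (hIo : 0 < Io) (hGsh : 0 ≤ Gsh)
    (hφ : 0 < φ (junctionVoltage Rs p)) (hV : 0 ≤ junctionVoltage Rs p) (hI : 0 ≤ p.2) :
    0 < Iph := by
  rw [hp]
  positivity

end OnDiodeCurve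

theorem stmt_19_general {s : Set 𝕜} {φ : 𝕜 → 𝕜} {Isc Voc Vx Ix Rs Iph Io Gsh : 𝕜}
    (hφ : StrictConvexOn 𝕜 s φ) (hsc : Rs * Isc ∈ s) (hoc : Voc ∈ s) (hφoc : 0 < φ Voc)
    (hVoc : 0 < Voc) (hIx : Isc * (1 - Vx / Voc) < Ix)
    (hscx : Rs * Isc < Vx + Rs * Ix) (hxoc : Vx + Rs * Ix < Voc)
    (hp : OnDiodeCurve φ Iph Io Gsh Rs (0, Isc)) (hq : OnDiodeCurve φ Iph Io Gsh Rs (Vx, Ix))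
    (hr : OnDiodeCurve φ Iph Io Gsh Rs (Voc, 0)) (hGsh : 0 ≤ Gsh) :
    0 < Iph ∧ 0 < Io := by
  have Vsc_eq : junctionVoltage Rs (0, Isc) = Rs * Isc := zero_add _
  have Voc_eq : junctionVoltage Rs (Voc, 0) = Voc := by simp [junctionVoltage]
  have above_chord : 0 < chordExcess (0, Isc) (Vx, Ix) (Voc, 0) := by
    have chord_eq : Isc + (0 - Isc) * ((Vx - 0) / (Voc - 0)) = Isc * (1 - Vx / Voc) := by
      rw [sub_zero, sub_zero]
      ring
    exact (chordExcess_pos_iff hVoc).2 (chord_eq.trans_lt hIx)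
  have hIo : 0 < Io := hp.saturationCurrent_pos hφ hq hr (by rwa [Vsc_eq]) (by rwa [Voc_eq])
    (Vsc_eq.trans_lt hscx) (hxoc.trans_eq Voc_eq.symm) above_chord
  exact ⟨hr.photocurrent_pos hIo hGsh (by rwa [Voc_eq]) (hVoc.le.trans_eq Voc_eq.symm) le_rfl, hIo⟩

end SingleDiode

/-- If (I_ph, I_o, G_sh) is the unique solution of the linear system obtained by
imposing the SDM equation at (0, I_sc), (V_x, I_x) and (V_oc, 0), and G_sh > 0,
then also I_ph > 0 and I_o > 0. -/
theorem stmt_19 (Isc Voc Vx Ix A Rs Iph Io Gsh : ℝ)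
    (hIsc : 0 < Isc) (hVoc : 0 < Voc) (hVx0 : 0 < Vx) (hVxVoc : Vx < Voc)
    (hIx1 : Isc * (1 - Vx / Voc) < Ix) (hIx2 : Ix < Isc)
    (hA : 0 < A) (hRs : 0 < Rs)
    (hcond1 : Rs * Isc < Vx + Rs * Ix) (hcond2 : Vx + Rs * Ix < Voc)
    (hsys1 : Iph = Io * (Real.exp ((0 + Rs * Isc) / A) - 1) + Gsh * (0 + Rs * Isc) + Isc)
    (hsys2 : Iph = Io * (Real.exp ((Vx + Rs * Ix) / A) - 1) + Gsh * (Vx + Rs * Ix) + Ix)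
    (hsys3 : Iph = Io * (Real.exp ((Voc + Rs * 0) / A) - 1) + Gsh * (Voc + Rs * 0) + 0)
    (huniq : ∃! t : ℝ × ℝ × ℝ,
        t.1 = t.2.1 * (Real.exp ((0 + Rs * Isc) / A) - 1) + t.2.2 * (0 + Rs * Isc) + Isc ∧
        t.1 = t.2.1 * (Real.exp ((Vx + Rs * Ix) / A) - 1) + t.2.2 * (Vx + Rs * Ix) + Ix ∧
        t.1 = t.2.1 * (Real.exp ((Voc + Rs * 0) / A) - 1) + t.2.2 * (Voc + Rs * 0) + 0)
    (hGsh : 0 < Gsh) :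
    0 < Iph ∧ 0 < Io := by
  exact stmt_19_general (strictConvexOn_exp_div_sub_one hA.ne') (Set.mem_univ _) (Set.mem_univ _)
    (sub_pos.2 (Real.one_lt_exp_iff.2 (div_pos hVoc hA))) hVoc hIx1 hcond1 hcond2
    hsys1 hsys2 hsys3 hGsh.le
end
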